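/- Let f_j, g_i be convex polynomials, z₀ ∈ K, and suppose: (i) there exists x̂ with g_i(x̂) < 0 for all i and f_j(x̂) < f_j(z₀) for all j (Slater condition); (ii) Σ_j λ_j ∇²f_j(x̄) ≻ 0 where x̄ minimizes λᵀf over K_{z₀}. Then there exist sum-of-squares polynomials σ, σ₀, scalars μ̄_i ≥ 0, ν̄_j ≥ 0 such that λᵀf − f̄_{z₀} = σ₀ − Σ_i μ̄_i g_i − Σ_j ν̄_j (f_j − f_j(z₀)) − σ·(λᵀf − λᵀf(z₀)). -/

import Mathlib

/-- A real multivariate polynomial is a sum of squares. -/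
def IsSOS {n : ℕ} (q : MvPolynomial (Fin n) ℝ) : Prop :=
  ∃ (r : ℕ) (s : Fin r → MvPolynomial (Fin n) ℝ), q = ∑ l, (s l) ^ 2

/-!
Put `φ = λᵀf - λᵀf(z₀)` and let `Λ = λᵀf - f̄ + ∑ μᵢ gᵢ + ∑ νⱼ (fⱼ - fⱼ(z₀))` be the Lagrangian
with the multipliers provided by Slater's condition. It is nonnegative and convex, vanishes at `x̄`
and has a positive definite Hessian there. After translating `x̄` to `0`, Taylor's formula gives
`Λ = Xᵀ A X` with `A(x) = ∫₀¹ (1 - t) ∇²Λ(t x) dt`, and `A(x)` is positive definite at *every* `x`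
because the Hessian is positive semidefinite along the segment and definite at its origin. So `Λ` is
a sum of squares modulo `φ` as soon as a Positivstellensatz for positive definite matrices holds on
`{φ ≤ 0}`; it follows from the scalar one by adjoining an eigenvalue indeterminate to the ring and
then substituting the matrix `A` for it. The scalar Positivstellensatz needs the preordering
generated by `-φ` to be archimedean, i.e. every point of `{φ ≤ 0}` over an ordered extension field
of `ℝ` to be finite: after a linear change of variables, the convex polynomial `φ` is coercive in a
weighted sense, each coordinate having its own growth rate.
-/

section Preordering

universe u

variable {B : Type u} [CommRing B] {T : Subsemiring B}

theorem mul_self_mem_of_sumSq_le (hT : Subsemiring.sumSq B ≤ T) (a : B) : a * a ∈ T :=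
  hT (Subsemiring.mem_sumSq.2 (IsSumSq.mul_self a))

theorem self_mem_sup_closure_singleton (T : Subsemiring B) (a : B) :
    a ∈ T ⊔ Subsemiring.closure {a} :=
  le_sup_right (α := Subsemiring B) (Subsemiring.subset_closure rfl)

theorem mem_sup_closure_singleton_of_mem (a : B) {x : B} (hx : x ∈ T) :
    x ∈ T ⊔ Subsemiring.closure {a} :=
  le_sup_left (α := Subsemiring B) hx

theorem mem_sup_closure_singleton_iff (hT : Subsemiring.sumSq B ≤ T) {a x : B} :
    x ∈ T ⊔ Subsemiring.closure {a} ↔ ∃ p ∈ T, ∃ q ∈ T, x = p + a * q := by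
  refine ⟨fun hx => ?_, ?_⟩
  · let S : Subsemiring B :=
      { carrier := {x | ∃ p ∈ T, ∃ q ∈ T, x = p + a * q}
        zero_mem' := ⟨0, zero_mem T, 0, zero_mem T, by ring⟩
        one_mem' := ⟨1, one_mem T, 0, zero_mem T, by ring⟩
        add_mem' := by
          rintro _ _ ⟨p, hp, q, hq, rfl⟩ ⟨p', hp', q', hq', rfl⟩
          exact ⟨p + p', add_mem hp hp', q + q', add_mem hq hq', by ring⟩
        mul_mem' := by
          rintro _ _ ⟨p, hp, q, hq, rfl⟩ ⟨p', hp', q', hq', rfl⟩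
          exact ⟨p * p' + a * a * (q * q'),
            add_mem (mul_mem hp hp') (mul_mem (mul_self_mem_of_sumSq_le hT a) (mul_mem hq hq')),
            p * q' + q * p', add_mem (mul_mem hp hq') (mul_mem hq hp'), by ring⟩ }
    have hTS : T ≤ S := fun p hp => ⟨p, hp, 0, zero_mem T, by ring⟩
    have haS : a ∈ S := ⟨0, zero_mem T, 1, one_mem T, by ring⟩
    exact sup_le hTS (Subsemiring.closure_le.2 (Set.singleton_subset_iff.2 haS)) hx
  · rintro ⟨p, hp, q, hq, rfl⟩
    exact add_mem (mem_sup_closure_singleton_of_mem a hp)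
      (mul_mem (self_mem_sup_closure_singleton T a) (mem_sup_closure_singleton_of_mem a hq))

theorem neg_one_notMem_sSup_of_directedOn {c : Set (Subsemiring B)} (hne : c.Nonempty)
    (hc : DirectedOn (· ≤ ·) c) (h : ∀ S ∈ c, (-1 : B) ∉ S) : (-1 : B) ∉ sSup c := by
  rw [Subsemiring.mem_sSup_of_directedOn hne hc]
  rintro ⟨S, hS, hmem⟩
  exact h S hS hmem

theorem exists_maximal_neg_one_notMem (h : (-1 : B) ∉ T) :
    ∃ P, T ≤ P ∧ Maximal (fun S : Subsemiring B => (-1 : B) ∉ S) P :=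
  zorn_le_nonempty₀ {S : Subsemiring B | (-1 : B) ∉ S}
    (fun c hc hchain S hS => ⟨sSup c,
      neg_one_notMem_sSup_of_directedOn ⟨S, hS⟩ hchain.directedOn hc,
      fun _ => le_sSup⟩) T h

theorem exists_isOrdering_of_neg_one_notMem (hT : Subsemiring.sumSq B ≤ T) (h : (-1 : B) ∉ T) :
    ∃ O : RingPreordering B, O.IsOrdering ∧ T ≤ O.toSubsemiring := by
  obtain ⟨P, hTP, hP⟩ := exists_maximal_neg_one_notMem h
  have hsq := hT.trans hTP
  have neg_one_eq : ∀ a ∉ P, ∃ p ∈ P, ∃ q ∈ P, -1 = p + a * q := by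
    intro a ha
    rw [← mem_sup_closure_singleton_iff hsq]
    by_contra hmem
    have hle := hP.le_of_ge hmem le_sup_left
    exact ha (hle (self_mem_sup_closure_singleton P a))
  let O : RingPreordering B := ⟨P, fun {x} ⟨a, hx⟩ => hx ▸ mul_self_mem_of_sumSq_le hsq a, hP.prop⟩
  refine ⟨O, RingPreordering.isOrdering_iff.2 fun a b (hab : -(a * b) ∈ P) => ?_, hTP⟩
  by_contra! hnot
  obtain ⟨p, hp, q, hq, ha⟩ := neg_one_eq a hnot.1
  obtain ⟨p', hp', q', hq', hb⟩ := neg_one_eq b hnot.2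
  have hneg : (-1 : B) = p + p' + p * p' + -(a * b) * (q * q') := by
    linear_combination (1 + p') * ha - a * q * hb
  apply hP.prop
  rw [hneg]
  exact add_mem (add_mem (add_mem hp hp') (mul_mem hp hp')) (mul_mem hab (mul_mem hq hq'))

open RingPreordering in
/-- The positive cone that an ordering `O` of `B` induces on the residue field at its support,
consisting of the fractions `a / b²` with `a ∈ O`. -/
def residueCone (O : RingPreordering B) [O.IsOrdering] : RingCone O.support.ResidueField :=
  let ρ := algebraMap B O.support.ResidueField
  have hρ : ∀ b, ρ b ≠ 0 ↔ b ∉ O.support := fun b => Ideal.algebraMap_residueField_eq_zero.not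
  { carrier := {x | ∃ a ∈ O, ∃ b ∉ O.support, x = ρ a / ρ b ^ 2}
    zero_mem' := ⟨0, zero_mem O, 1, one_notMem_support O, by simp⟩
    one_mem' := ⟨1, one_mem O, 1, one_notMem_support O, by simp⟩
    add_mem' := by
      rintro _ _ ⟨a, ha, b, hb, rfl⟩ ⟨a', ha', b', hb', rfl⟩
      refine ⟨a * b' ^ 2 + a' * b ^ 2,
        add_mem (mul_mem ha (O.pow_two_mem b')) (mul_mem ha' (O.pow_two_mem b)), b * b',
        fun h => (Ideal.IsPrime.mem_or_mem inferInstance h).elim hb hb', ?_⟩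
      have hb0 := (hρ b).2 hb
      have hb0' := (hρ b').2 hb'
      simp only [map_add, map_mul, map_pow]
      field_simp
    mul_mem' := by
      rintro _ _ ⟨a, ha, b, hb, rfl⟩ ⟨a', ha', b', hb', rfl⟩
      refine ⟨a * a', mul_mem ha ha', b * b',
        fun h => (Ideal.IsPrime.mem_or_mem inferInstance h).elim hb hb', ?_⟩
      simp only [map_mul, mul_pow, div_mul_div_comm]
    eq_zero_of_mem_of_neg_mem' := by
      rintro _ ⟨a, ha, b, hb, rfl⟩ ⟨a', ha', b', hb', hneg⟩
      have hb0 := (hρ b).2 hb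
      have hb0' := (hρ b').2 hb'
      have hsum : a * b' ^ 2 + a' * b ^ 2 ∈ O.support := by
        rw [← Ideal.algebraMap_residueField_eq_zero (I := O.support)]
        field_simp at hneg
        simp only [map_add, map_mul, map_pow]
        linear_combination -hneg
      have hab : a * b' ^ 2 ∈ O.support := by
        refine mem_support.2 ⟨mul_mem ha (O.pow_two_mem b'), ?_⟩
        have h := add_mem (mem_support.1 hsum).2 (mul_mem ha' (O.pow_two_mem b))
        rwa [neg_add, neg_add_cancel_right] at h
      rw [← Ideal.algebraMap_residueField_eq_zero, map_mul, map_pow] at hab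
      rw [show ρ a = 0 from (mul_eq_zero.1 hab).resolve_right (pow_ne_zero 2 hb0'), zero_div] }

instance (O : RingPreordering B) [O.IsOrdering] : HasMemOrNegMem (residueCone O) := by
  refine ⟨fun x => ?_⟩
  obtain ⟨a, b, hb, rfl⟩ := IsFractionRing.div_surjective (A := B ⧸ O.support) x
  obtain ⟨a, rfl⟩ := Ideal.Quotient.mk_surjective a
  obtain ⟨b, rfl⟩ := Ideal.Quotient.mk_surjective b
  simp only [Ideal.algebraMap_quotient_residueField_mk]
  have hb' : b ∉ O.support := by
    simpa [Ideal.Quotient.eq_zero_iff_mem] using nonZeroDivisors.ne_zero hb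
  have hb0 := Ideal.algebraMap_residueField_eq_zero.not.2 hb'
  rcases mem_or_neg_mem O (a * b) with hab | hab
  · refine .inl ⟨a * b, hab, b, hb', ?_⟩
    rw [map_mul]
    field_simp
  · refine .inr ⟨-(a * b), hab, b, hb', ?_⟩
    rw [map_neg, map_mul]
    field_simp

theorem exists_algHom_orderedField_of_isOrdering (R : Type*) [CommRing R] [Algebra R B]
    (O : RingPreordering B) [O.IsOrdering] :
    ∃ (K : Type u) (_ : Field K) (_ : LinearOrder K) (_ : IsStrictOrderedRing K) (_ : Algebra R K)
      (ρ : B →ₐ[R] K), ∀ a ∈ O, 0 ≤ ρ a := by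
  classical
  let K := O.support.ResidueField
  let _ : LinearOrder K := .mkOfAddGroupCone (residueCone O)
  have _ : IsOrderedRing K := .mkOfCone (residueCone O)
  refine ⟨K, inferInstance, inferInstance, IsOrderedRing.toIsStrictOrderedRing K, inferInstance,
    IsScalarTower.toAlgHom R B K, fun a ha => ?_⟩
  change algebraMap B K a - 0 ∈ residueCone O
  exact ⟨a, ha, 1, RingPreordering.one_notMem_support O, by simp [K]⟩

theorem neg_one_mem_of_forall_not_nonneg (R : Type*) [CommRing R] [Algebra R B]
    (hT : Subsemiring.sumSq B ≤ T)
    (H : ∀ (K : Type u) [Field K] [LinearOrder K] [IsStrictOrderedRing K] [Algebra R K]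
      (ρ : B →ₐ[R] K), ¬ ∀ t ∈ T, 0 ≤ ρ t) :
    -1 ∈ T := by
  by_contra h
  obtain ⟨O, _, hTO⟩ := exists_isOrdering_of_neg_one_notMem hT h
  obtain ⟨K, _, _, _, _, ρ, hρ⟩ := exists_algHom_orderedField_of_isOrdering R O
  exact H K ρ fun t ht => hρ t (hTO ht)

theorem exists_mul_eq_one_add_of_neg_one_mem (hT : Subsemiring.sumSq B ≤ T) {f : B}
    (h : -1 ∈ T ⊔ Subsemiring.closure {-f}) : ∃ s ∈ T, ∃ t ∈ T, s * f = 1 + t := by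
  obtain ⟨t, ht, s, hs, h⟩ := (mem_sup_closure_singleton_iff hT).1 h
  exact ⟨s, hs, t, ht, by linear_combination h⟩

theorem exists_mul_eq_one_add_of_pos (R : Type*) [CommRing R] [Algebra R B]
    (hT : Subsemiring.sumSq B ≤ T) {f : B}
    (hf : ∀ (K : Type u) [Field K] [LinearOrder K] [IsStrictOrderedRing K] [Algebra R K]
      (ρ : B →ₐ[R] K), (∀ t ∈ T, 0 ≤ ρ t) → 0 < ρ f) :
    ∃ s ∈ T, ∃ t ∈ T, s * f = 1 + t := by
  refine exists_mul_eq_one_add_of_neg_one_mem hT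
    (neg_one_mem_of_forall_not_nonneg R (hT.trans le_sup_left) fun K _ _ _ _ ρ hρ => ?_)
  have hneg : 0 ≤ ρ (-f) := hρ _ (self_mem_sup_closure_singleton T _)
  rw [map_neg, neg_nonneg] at hneg
  exact hneg.not_gt (hf K ρ fun t ht => hρ t (mem_sup_closure_singleton_of_mem _ ht))

theorem monotone_sup_closure_sub_natCast (T : Subsemiring B) (x : B) :
    Monotone fun n : ℕ => T ⊔ Subsemiring.closure {x - n} := by
  refine monotone_nat_of_le_succ fun n => sup_le le_sup_left ?_
  rw [Subsemiring.closure_le, Set.singleton_subset_iff, SetLike.mem_coe]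
  convert add_mem (self_mem_sup_closure_singleton T (x - (n + 1 : ℕ))) (one_mem _) using 1
  push_cast
  ring

/- If no `n` worked, then `x ≥ n` would be consistent with `T` for all `n` simultaneously, giving a
homomorphism at which `x` is infinite. -/
theorem exists_natCast_mul_sub_eq_one_add (R : Type*) [CommRing R] [Algebra R B]
    (hT : Subsemiring.sumSq B ≤ T) {x : B}
    (hx : ∀ (K : Type u) [Field K] [LinearOrder K] [IsStrictOrderedRing K] [Algebra R K]
      (ρ : B →ₐ[R] K), (∀ t ∈ T, 0 ≤ ρ t) → 0 ≤ ArchimedeanClass.mk (ρ x)) :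
    ∃ n : ℕ, ∃ s ∈ T, ∃ t ∈ T, s * (n - x) = 1 + t := by
  let S (n : ℕ) := T ⊔ Subsemiring.closure {x - n}
  have hdir : Directed (· ≤ ·) S := (monotone_sup_closure_sub_natCast T x).directed_le
  have hneg : -1 ∈ ⨆ n, S n := by
    refine neg_one_mem_of_forall_not_nonneg R
      (hT.trans <| le_sup_left.trans <| le_iSup S 0) fun K _ _ _ _ ρ hρ => ?_
    obtain ⟨n, hn⟩ := ArchimedeanClass.exists_nat_gt_of_mk_nonneg
      (hx K ρ fun t ht => hρ t (le_iSup S 0 (mem_sup_closure_singleton_of_mem _ ht)))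
    have hge : 0 ≤ ρ (x - n) := hρ _ <| le_iSup S n <| self_mem_sup_closure_singleton T _
    rw [map_sub, map_natCast, sub_nonneg] at hge
    exact hge.not_gt hn
  obtain ⟨n, hn⟩ := (Subsemiring.mem_iSup_of_directed hdir).1 hneg
  exact ⟨n, exists_mul_eq_one_add_of_neg_one_mem hT (by rwa [neg_sub])⟩

end Preordering

section ArchimedeanPreordering

universe u

variable {B : Type u} [CommRing B] [Algebra ℝ B] {T : Subsemiring B}

theorem algebraMap_mem_of_nonneg (hT : Subsemiring.sumSq B ≤ T) {r : ℝ} (hr : 0 ≤ r) :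
    algebraMap ℝ B r ∈ T := by
  have h := mul_self_mem_of_sumSq_le hT (algebraMap ℝ B √r)
  rwa [← map_mul, Real.mul_self_sqrt hr] at h

theorem mem_of_natCast_mul_mem (hT : Subsemiring.sumSq B ≤ T) {n : ℕ} (hn : n ≠ 0) {b : B}
    (h : n * b ∈ T) : b ∈ T := by
  have hinv := mul_mem (algebraMap_mem_of_nonneg hT (inv_nonneg.2 n.cast_nonneg)) h
  rwa [← mul_assoc, ← map_natCast (algebraMap ℝ B), ← map_mul,
    inv_mul_cancel₀ (Nat.cast_ne_zero.2 hn), map_one, one_mul] at hinv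

/-- The subalgebra of elements bounded with respect to a preordering `T`: those `b` with
`-n ≤ b ≤ n` for some natural number `n`, where `a ≤ b` means `b - a ∈ T`. -/
def boundedSubalgebra (T : Subsemiring B) (hT : Subsemiring.sumSq B ≤ T) : Subalgebra ℝ B where
  carrier := {b | ∃ n : ℕ, n - b ∈ T ∧ n + b ∈ T}
  algebraMap_mem' r := by
    obtain ⟨n, hn⟩ := exists_nat_ge |r|
    have hle := abs_le.1 hn
    refine ⟨n, ?_, ?_⟩
    · rw [← map_natCast (algebraMap ℝ B), ← map_sub]
      exact algebraMap_mem_of_nonneg hT (by linarith)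
    · rw [← map_natCast (algebraMap ℝ B), ← map_add]
      exact algebraMap_mem_of_nonneg hT (by linarith)
  add_mem' := by
    rintro a b ⟨n, hn, hn'⟩ ⟨m, hm, hm'⟩
    refine ⟨n + m, ?_, ?_⟩
    · convert add_mem hn hm using 1
      push_cast
      ring
    · convert add_mem hn' hm' using 1
      push_cast
      ring
  mul_mem' := by
    rintro a b ⟨n, hn, hn'⟩ ⟨m, hm, hm'⟩
    have hn0 : (n : B) ∈ T := natCast_mem T n
    have hm0 : (m : B) ∈ T := natCast_mem T m
    refine ⟨3 * n * m, ?_, ?_⟩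
    · convert add_mem (mul_mem hn' hm) (add_mem (mul_mem hn0 hm') (mul_mem hm0 hn)) using 1
      push_cast
      ring
    · convert add_mem (mul_mem hn' hm') (add_mem (mul_mem hn0 hm) (mul_mem hm0 hn)) using 1
      push_cast
      ring

theorem mem_boundedSubalgebra_of_sub_sq_mem (hT : Subsemiring.sumSq B ≤ T) {n : ℕ} {b : B}
    (h : n - b ^ 2 ∈ T) : b ∈ boundedSubalgebra T hT := by
  have two_mul_half : 2 * algebraMap ℝ B 2⁻¹ = 1 := by
    rw [← map_ofNat (algebraMap ℝ B) 2, ← map_mul, mul_inv_cancel₀ two_ne_zero, map_one]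
  have three_quarters := algebraMap_mem_of_nonneg (T := T) hT (r := 1 - 2⁻¹ * 2⁻¹) (by norm_num)
  rw [map_sub, map_one, map_mul] at three_quarters
  refine ⟨n + 1, ?_, ?_⟩
  · convert add_mem (add_mem h (mul_self_mem_of_sumSq_le hT (b - algebraMap ℝ B 2⁻¹)))
      three_quarters using 1
    push_cast
    linear_combination b * two_mul_half
  · convert add_mem (add_mem h (mul_self_mem_of_sumSq_le hT (b + algebraMap ℝ B 2⁻¹)))
      three_quarters using 1
    push_cast
    linear_combination -b * two_mul_half

theorem boundedSubalgebra_eq_top_of_sub_sum_sq_mem (hT : Subsemiring.sumSq B ≤ T) {s : Finset B}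
    (hs : Algebra.adjoin ℝ (s : Set B) = ⊤) {n : ℕ} (h : n - ∑ x ∈ s, x ^ 2 ∈ T) :
    boundedSubalgebra T hT = ⊤ := by
  classical
  rw [eq_top_iff, ← hs, Algebra.adjoin_le_iff]
  intro x hx
  have hrest : ∑ y ∈ s.erase x, y ^ 2 ∈ T :=
    sum_mem fun y _ => sq y ▸ mul_self_mem_of_sumSq_le hT y
  refine mem_boundedSubalgebra_of_sub_sq_mem hT (n := n) ?_
  rw [← Finset.add_sum_erase s _ hx] at h
  convert add_mem h hrest using 1
  ring

/- Wörmann's trick: over the smaller preordering generated by `n - ∑ x²` everything is bounded, in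
particular `t ≤ k`, and multiplication by `1 + t` carries that bound over to `T`. -/
theorem boundedSubalgebra_eq_top_of_mul_eq_one_add (hT : Subsemiring.sumSq B ≤ T) {s : Finset B}
    (hs : Algebra.adjoin ℝ (s : Set B) = ⊤) {n : ℕ} {u t : B} (hu : u ∈ T) (ht : t ∈ T)
    (h : u * (n - ∑ x ∈ s, x ^ 2) = 1 + t) :
    boundedSubalgebra T hT = ⊤ := by
  set a := ∑ x ∈ s, x ^ 2
  have ha : a ∈ T := sum_mem fun y _ => sq y ▸ mul_self_mem_of_sumSq_le hT y
  have h1t : 1 + t ∈ T := add_mem (one_mem T) ht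
  have h1ta : (1 + t) * (n - a) ∈ T := by
    rw [← h, mul_assoc]
    exact mul_mem hu (mul_self_mem_of_sumSq_le hT _)
  let T₀ := Subsemiring.sumSq B ⊔ Subsemiring.closure {(n : B) - a}
  have htop : boundedSubalgebra T₀ le_sup_left = ⊤ :=
    boundedSubalgebra_eq_top_of_sub_sum_sq_mem _ hs
      (self_mem_sup_closure_singleton _ _)
  obtain ⟨k, hk, -⟩ : t ∈ boundedSubalgebra T₀ le_sup_left := htop ▸ Algebra.mem_top
  obtain ⟨p, hp, q, hq, hkt⟩ := (mem_sup_closure_singleton_iff le_rfl).1 hk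
  have hmul : (1 + t) * (k - t) ∈ T := by
    convert add_mem (mul_mem h1t (hT hp)) (mul_mem h1ta (hT hq)) using 1
    rw [hkt]
    ring
  have htk : (2 * k + k ^ 2 : ℕ) - t ∈ T := by
    have hmul' : (1 + t) * (2 * k - t) ∈ T := by
      convert add_mem hmul (mul_mem h1t (natCast_mem T k)) using 1
      ring
    convert add_mem hmul' (mul_self_mem_of_sumSq_le hT (t - k)) using 1
    push_cast
    ring
  refine boundedSubalgebra_eq_top_of_sub_sum_sq_mem hT hs (n := n + n * (2 * k + k ^ 2)) ?_
  convert add_mem (add_mem h1ta (mul_mem ht ha)) (mul_mem (natCast_mem T n) htk) using 1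
  push_cast
  ring

theorem mem_of_mul_eq_one_add (hT : Subsemiring.sumSq B ≤ T) (htop : boundedSubalgebra T hT = ⊤)
    {f s t : B} (hs : s ∈ T) (ht : t ∈ T) (h : s * f = 1 + t) : f ∈ T := by
  obtain ⟨k, hk, -⟩ : s + 1 ∈ boundedSubalgebra T hT := htop ▸ Algebra.mem_top
  obtain ⟨m, -, hm⟩ : f ∈ boundedSubalgebra T hT := htop ▸ Algebra.mem_top
  have hks : (k + 1 : ℕ) - s ∈ T := by
    convert add_mem hk (add_mem (one_mem T) (one_mem T)) using 1
    push_cast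
    ring
  have descent (j : ℕ) (hj : (k + 1 : ℕ) * f + (j + 1 : ℕ) ∈ T) : (k + 1 : ℕ) * f + j ∈ T := by
    refine mem_of_natCast_mul_mem hT k.succ_ne_zero ?_
    convert add_mem (mul_mem hks hj) (add_mem (mul_mem (natCast_mem T (k + 1)) ht)
      (mul_mem (natCast_mem T (j + 1)) hs)) using 1
    push_cast
    linear_combination (k + 1) * h
  have hle (j : ℕ) (hj : (k + 1 : ℕ) * f + j ∈ T) : (k + 1 : ℕ) * f ∈ T := by
    induction j with
    | zero => simpa using hj
    | succ j ih => exact ih (descent j hj)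
  refine mem_of_natCast_mul_mem hT k.succ_ne_zero (hle ((k + 1) * m) ?_)
  convert mul_mem (natCast_mem T (k + 1)) hm using 1
  push_cast
  ring

/-- The structure map of an ordered extension field of `ℝ`, as an ordered homomorphism; monotonicity
is automatic because nonnegative reals are squares. -/
def realOrderRingHom (K : Type*) [Field K] [LinearOrder K] [IsStrictOrderedRing K] [Algebra ℝ K] :
    ℝ →+*o K :=
  ⟨algebraMap ℝ K, ringHom_monotone (fun _ hr => Real.isSquare_iff.2 hr) _⟩

theorem stdPart_algebraMap {K : Type*} [Field K] [LinearOrder K] [IsStrictOrderedRing K]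
    [Algebra ℝ K] (r : ℝ) : ArchimedeanClass.stdPart (algebraMap ℝ K r) = r :=
  ArchimedeanClass.stdPart_map_real (realOrderRingHom K) r

theorem mk_algebraMap_nonneg {K : Type*} [Field K] [LinearOrder K] [IsStrictOrderedRing K]
    [Algebra ℝ K] (r : ℝ) : 0 ≤ ArchimedeanClass.mk (algebraMap ℝ K r) :=
  ArchimedeanClass.mk_map_nonneg_of_archimedean (realOrderRingHom K) r

/-- The finite elements of an ordered extension field of `ℝ`: those bounded in absolute value by
a natural number. -/
def finiteSubalgebra (K : Type*) [Field K] [LinearOrder K] [IsStrictOrderedRing K] [Algebra ℝ K] :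
    Subalgebra ℝ K where
  carrier := {x | 0 ≤ ArchimedeanClass.mk x}
  mul_mem' {x y} hx hy := by
    rw [Set.mem_ofPred_eq] at *
    exact (add_nonneg hx hy).trans_eq (ArchimedeanClass.mk_mul x y).symm
  add_mem' {x y} hx hy := by
    rw [Set.mem_ofPred_eq] at *
    exact (le_min hx hy).trans (ArchimedeanClass.min_le_mk_add x y)
  algebraMap_mem' r := by
    rw [Set.mem_ofPred_eq]
    exact mk_algebraMap_nonneg r

theorem mem_finiteSubalgebra {K : Type*} [Field K] [LinearOrder K] [IsStrictOrderedRing K]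
    [Algebra ℝ K] {x : K} : x ∈ finiteSubalgebra K ↔ 0 ≤ ArchimedeanClass.mk x := by
  rfl

/-- The standard part of a finite element, as a homomorphism of real algebras. -/
noncomputable def stdPartAlgHom (K : Type*) [Field K] [LinearOrder K] [IsStrictOrderedRing K]
    [Algebra ℝ K] : finiteSubalgebra K →ₐ[ℝ] ℝ where
  toFun x := ArchimedeanClass.stdPart (x : K)
  map_one' := by simp
  map_mul' x y :=
    ArchimedeanClass.stdPart_mul (mem_finiteSubalgebra.1 x.2) (mem_finiteSubalgebra.1 y.2)
  map_zero' := by simp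
  map_add' x y :=
    ArchimedeanClass.stdPart_add (mem_finiteSubalgebra.1 x.2) (mem_finiteSubalgebra.1 y.2)
  commutes' := stdPart_algebraMap

theorem mem_of_pos_of_mk_nonneg [hB : Algebra.FiniteType ℝ B] (hT : Subsemiring.sumSq B ≤ T)
    (hfin : ∀ (K : Type u) [Field K] [LinearOrder K] [IsStrictOrderedRing K] [Algebra ℝ K]
      (ρ : B →ₐ[ℝ] K), (∀ t ∈ T, 0 ≤ ρ t) → ∀ b, 0 ≤ ArchimedeanClass.mk (ρ b))
    {f : B} (hf : ∀ χ : B →ₐ[ℝ] ℝ, (∀ t ∈ T, 0 ≤ χ t) → 0 < χ f) : f ∈ T := by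
  obtain ⟨s, hs⟩ := hB.out
  obtain ⟨n, u, hu, t, ht, hbound⟩ := exists_natCast_mul_sub_eq_one_add ℝ hT
    (x := ∑ x ∈ s, x ^ 2) fun K _ _ _ _ ρ hρ => hfin K ρ hρ _
  obtain ⟨u', hu', t', ht', hcert⟩ := exists_mul_eq_one_add_of_pos ℝ hT (f := f)
    fun K _ _ _ _ ρ hρ => by
      by_contra! hneg
      have hχ := hf ((stdPartAlgHom K).comp (ρ.codRestrict _ fun b =>
          mem_finiteSubalgebra.2 (hfin K ρ hρ b))) fun t ht =>
        ArchimedeanClass.stdPart_nonneg (hρ t ht)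
      exact hχ.not_ge (ArchimedeanClass.stdPart_nonpos hneg)
  exact mem_of_mul_eq_one_add hT
    (boundedSubalgebra_eq_top_of_mul_eq_one_add hT hs hu ht hbound) hu' ht' hcert

end ArchimedeanPreordering

section MatrixCertificate

universe u

open Polynomial Matrix

theorem mk_nonneg_of_isRoot_map {R K : Type*} [CommRing R] [Field K] [LinearOrder K]
    [IsStrictOrderedRing K] {ρ : R →+* K} (hρ : ∀ r, 0 ≤ ArchimedeanClass.mk (ρ r)) {P : R[X]}
    (hP : P.Monic) {z : K} (hz : P.eval₂ ρ z = 0) : 0 ≤ ArchimedeanClass.mk z := by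
  let V := (ArchimedeanClass.addValuation K).toValuation.valuationSubring
  let ρV : R →+* V := ρ.codRestrict V hρ
  have hint : IsIntegral V z := ⟨P.map ρV, hP.map ρV, by rw [eval₂_map]; exact hz⟩
  obtain ⟨y, rfl⟩ := IsIntegrallyClosed.isIntegral_iff.1 hint
  exact y.2

theorem mk_nonneg_of_mk_C_nonneg {R K : Type*} [CommRing R] [Field K] [LinearOrder K]
    [IsStrictOrderedRing K] {ρ : R[X] →+* K} (hC : ∀ r, 0 ≤ ArchimedeanClass.mk (ρ (C r)))
    (hX : 0 ≤ ArchimedeanClass.mk (ρ X)) (P : R[X]) : 0 ≤ ArchimedeanClass.mk (ρ P) := by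
  let V := (ArchimedeanClass.addValuation K).toValuation.valuationSubring
  change ρ P ∈ V
  rw [← eval₂_C_X (p := P), hom_eval₂, eval₂_eq_sum_range]
  exact sum_mem fun i _ => mul_mem (hC _) (pow_mem hX i)

theorem pos_of_isRoot_charpoly {ι : Type*} [Fintype ι] [DecidableEq ι] {M : Matrix ι ι ℝ}
    (hM : M.PosDef) {z : ℝ} (hz : M.charpoly.IsRoot z) : 0 < z := by
  rw [← mem_roots (M.charpoly_monic.ne_zero), hM.1.roots_charpoly_eq_eigenvalues] at hz
  obtain ⟨i, -, rfl⟩ := Multiset.mem_map.1 hz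
  exact hM.eigenvalues_pos i

variable {R ι : Type u} [CommRing R]

/-- The preordering of `R[X]` generated by `-φ` and `±p`, expressing that `φ ≤ 0` and `p = 0`. -/
noncomputable def sublevelRootPreordering (φ : R) (p : R[X]) : Subsemiring R[X] :=
  Subsemiring.sumSq R[X] ⊔ Subsemiring.closure {-C φ} ⊔ Subsemiring.closure {p} ⊔
    Subsemiring.closure {-p}

theorem sumSq_le_sublevelRootPreordering (φ : R) (p : R[X]) :
    Subsemiring.sumSq R[X] ≤ sublevelRootPreordering φ p :=
  le_sup_left.trans (le_sup_left.trans le_sup_left)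

theorem mem_sublevelRootPreordering {φ : R} {p f : R[X]}
    (hf : f ∈ sublevelRootPreordering φ p) :
    ∃ a b c : R[X], IsSumSq a ∧ IsSumSq b ∧ f = a - C φ * b + p * c := by
  have h₁ : Subsemiring.sumSq R[X] ≤ Subsemiring.sumSq R[X] ⊔ Subsemiring.closure {-C φ} :=
    le_sup_left
  obtain ⟨f₁, hf₁, c₁, -, rfl⟩ := (mem_sup_closure_singleton_iff (h₁.trans le_sup_left)).1 hf
  obtain ⟨f₂, hf₂, c₂, -, rfl⟩ := (mem_sup_closure_singleton_iff h₁).1 hf₁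
  obtain ⟨a, ha, b, hb, rfl⟩ := (mem_sup_closure_singleton_iff le_rfl).1 hf₂
  exact ⟨a, b, c₂ - c₁, Subsemiring.mem_sumSq.1 ha, Subsemiring.mem_sumSq.1 hb, by ring⟩

theorem isSumSq_dotProduct_aeval_mulVec [Fintype ι] [DecidableEq ι]
    {A : Matrix ι ι R} (hA : A.IsSymm) {p : R[X]} (hp : IsSumSq p) (v : ι → R) :
    IsSumSq (v ⬝ᵥ aeval A p *ᵥ v) := by
  induction hp with
  | zero => simp
  | sq_add r _ ih =>
    have hr : (aeval A r).IsSymm := by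
      rw [IsSymm, Polynomial.aeval_eq_sum_range, transpose_sum]
      simp only [transpose_smul, transpose_pow, hA.eq]
    have hsq : v ⬝ᵥ (aeval A r * aeval A r) *ᵥ v = (aeval A r *ᵥ v) ⬝ᵥ (aeval A r *ᵥ v) := by
      rw [← mulVec_mulVec, dotProduct_mulVec, ← mulVec_transpose, hr.eq]
    rw [map_add, map_mul, add_mulVec, dotProduct_add, hsq]
    exact (IsSumSq.sum fun i _ => IsSumSq.mul_self _).add ih

variable [Algebra ℝ R]

theorem apply_C_nonpos_and_apply_eq_zero {K : Type*} [CommRing K] [PartialOrder K]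
    [IsOrderedRing K] [Algebra ℝ K] {φ : R} {p : R[X]} {ρ : R[X] →ₐ[ℝ] K}
    (hρ : ∀ t ∈ sublevelRootPreordering φ p, 0 ≤ ρ t) : ρ (C φ) ≤ 0 ∧ ρ p = 0 := by
  have hφ : 0 ≤ ρ (-C φ) := hρ _ <| mem_sup_closure_singleton_of_mem _ <|
    mem_sup_closure_singleton_of_mem _ <| self_mem_sup_closure_singleton _ _
  have hp : 0 ≤ ρ p := hρ _ <| mem_sup_closure_singleton_of_mem _ <|
    self_mem_sup_closure_singleton _ _
  have hnp : 0 ≤ ρ (-p) := hρ _ <| self_mem_sup_closure_singleton _ _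
  rw [map_neg, neg_nonneg] at hφ hnp
  exact ⟨hφ, hnp.antisymm hp⟩

variable [Fintype ι]

/- The indeterminate of `R[X]` stands for an eigenvalue of `A`; an archimedean Positivstellensatz
certifies that it is positive, and substituting `A` for it kills the characteristic polynomial. -/
theorem exists_isSumSq_aeval_sub_smul_eq [DecidableEq ι] [Algebra.FiniteType ℝ R] {φ : R}
    (hφ : ∀ (K : Type u) [Field K] [LinearOrder K] [IsStrictOrderedRing K] [Algebra ℝ K]
      (ρ : R →ₐ[ℝ] K), ρ φ ≤ 0 → ∀ r, 0 ≤ ArchimedeanClass.mk (ρ r))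
    {A : Matrix ι ι R} (hA : ∀ χ : R →ₐ[ℝ] ℝ, χ φ ≤ 0 → (A.map χ).PosDef) :
    ∃ p q : R[X], IsSumSq p ∧ IsSumSq q ∧ aeval A p - φ • aeval A q = A := by
  have hX : X ∈ sublevelRootPreordering φ A.charpoly := by
    refine mem_of_pos_of_mk_nonneg (sumSq_le_sublevelRootPreordering φ A.charpoly)
      (fun K _ _ _ _ ρ hρ => ?_) fun χ hχ => ?_
    · obtain ⟨hρφ, hρA⟩ := apply_C_nonpos_and_apply_eq_zero hρ
      have hC := hφ K (ρ.comp CAlgHom) hρφ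
      refine mk_nonneg_of_mk_C_nonneg (ρ := ρ.toRingHom) hC
        (mk_nonneg_of_isRoot_map (ρ := (ρ : R[X] →+* K).comp C) hC A.charpoly_monic ?_)
      rw [← hρA]
      conv_rhs => rw [← eval₂_C_X (p := A.charpoly)]
      exact (hom_eval₂ _ C (ρ : R[X] →+* K) X).symm
    · obtain ⟨hχφ, hχA⟩ := apply_C_nonpos_and_apply_eq_zero hχ
      refine pos_of_isRoot_charpoly (hA (χ.comp CAlgHom) hχφ) (z := χ X) ?_
      have hmap : (A.map (χ.comp CAlgHom)).charpoly =
          A.charpoly.map ((χ : R[X] →+* ℝ).comp C) := Matrix.charpoly_map A _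
      rw [IsRoot.def, hmap, eval_map, ← hχA]
      conv_rhs => rw [← eval₂_C_X (p := A.charpoly)]
      exact (hom_eval₂ _ C (χ : R[X] →+* ℝ) X).symm
  obtain ⟨p, q, c, hp, hq, hpq⟩ := mem_sublevelRootPreordering hX
  refine ⟨p, q, hp, hq, ?_⟩
  have h := congrArg (aeval A) hpq
  simp only [map_add, map_sub, map_mul, aeval_X, aeval_C, Matrix.aeval_self_charpoly, zero_mul,
    add_zero] at h
  rw [Algebra.smul_def, ← h]

theorem exists_isSumSq_dotProduct_mulVec_eq [Algebra.FiniteType ℝ R] {φ : R}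
    (hφ : ∀ (K : Type u) [Field K] [LinearOrder K] [IsStrictOrderedRing K] [Algebra ℝ K]
      (ρ : R →ₐ[ℝ] K), ρ φ ≤ 0 → ∀ r, 0 ≤ ArchimedeanClass.mk (ρ r))
    {A : Matrix ι ι R} (hAsymm : A.IsSymm)
    (hA : ∀ χ : R →ₐ[ℝ] ℝ, χ φ ≤ 0 → (A.map χ).PosDef) (v : ι → R) :
    ∃ σ σ₀ : R, IsSumSq σ ∧ IsSumSq σ₀ ∧ v ⬝ᵥ A *ᵥ v = σ₀ - σ * φ := by
  classical
  obtain ⟨p, q, hp, hq, h⟩ := exists_isSumSq_aeval_sub_smul_eq hφ hA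
  refine ⟨_, _, isSumSq_dotProduct_aeval_mulVec hAsymm hq v,
    isSumSq_dotProduct_aeval_mulVec hAsymm hp v, ?_⟩
  conv_lhs => rw [← h, Matrix.sub_mulVec, dotProduct_sub, Matrix.smul_mulVec, dotProduct_smul]
  rw [smul_eq_mul, mul_comm]

end MatrixCertificate

section UnivariateConvexity

open Polynomial

theorem coeff_nonneg_of_eval_nonneg {P : ℝ[X]} {N : ℕ} (hdeg : P.natDegree ≤ N)
    (h : ∀ t, 0 ≤ P.eval t) : 0 ≤ P.coeff N := by
  rcases hdeg.lt_or_eq with hlt | rfl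
  · rw [coeff_eq_zero_of_natDegree_lt hlt]
  rw [coeff_natDegree]
  by_contra! hneg
  have hpos : 0 < P.degree := by
    by_contra! hle
    rw [eq_C_of_degree_le_zero hle, leadingCoeff_C, ← eval_C (a := P.coeff 0) (x := 0),
      ← eq_C_of_degree_le_zero hle] at hneg
    exact hneg.not_ge (h 0)
  obtain ⟨t, ht⟩ := ((P.tendsto_atBot_of_leadingCoeff_nonpos hpos hneg.le).eventually_lt_atBot
    0).exists
  exact ht.not_ge (h t)

theorem coeff_le_coeff_of_eval_le {P Q : ℝ[X]} {N : ℕ} (hP : P.natDegree ≤ N)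
    (hQ : Q.natDegree ≤ N) (h : ∀ t, P.eval t ≤ Q.eval t) : P.coeff N ≤ Q.coeff N := by
  rw [← sub_nonneg, ← coeff_sub]
  refine coeff_nonneg_of_eval_nonneg ((natDegree_sub_le Q P).trans (max_le hQ hP)) fun t => ?_
  rw [eval_sub]
  exact sub_nonneg.2 (h t)

theorem natDegree_le_of_le_eval_of_eval_le {P Q₁ Q₂ : ℝ[X]} {N : ℕ} (h₁ : Q₁.natDegree ≤ N)
    (h₂ : Q₂.natDegree ≤ N) (hle₁ : ∀ t, Q₁.eval t ≤ P.eval t)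
    (hle₂ : ∀ t, P.eval t ≤ Q₂.eval t) : P.natDegree ≤ N := by
  by_contra! hlt
  have hlower := coeff_le_coeff_of_eval_le (h₁.trans hlt.le) le_rfl hle₁
  have hupper := coeff_le_coeff_of_eval_le le_rfl (h₂.trans hlt.le) hle₂
  rw [coeff_eq_zero_of_natDegree_lt (h₁.trans_lt hlt)] at hlower
  rw [coeff_eq_zero_of_natDegree_lt (h₂.trans_lt hlt)] at hupper
  have hP : P = 0 := leadingCoeff_eq_zero.1 (hupper.antisymm hlower)
  simp [hP] at hlt

theorem leadingCoeff_pos_of_convexOn {P : ℝ[X]} (hP : ConvexOn ℝ Set.univ fun t => P.eval t)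
    (hdeg : 2 ≤ P.natDegree) : 0 < P.leadingCoeff := by
  have hmid (t : ℝ) : (C 2 * P).eval t ≤ (P.comp (C 2 * X) + C (P.eval 0)).eval t := by
    have h := hP.2 (Set.mem_univ (2 * t)) (Set.mem_univ 0) (by norm_num : (0 : ℝ) ≤ 1 / 2)
      (by norm_num : (0 : ℝ) ≤ 1 / 2) (by norm_num)
    rw [smul_zero, add_zero, smul_eq_mul, one_div, inv_mul_cancel_left₀ two_ne_zero] at h
    simp only [eval_mul, eval_C, eval_add, eval_comp, eval_X]
    simp only [smul_eq_mul] at h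
    linarith
  have hcoeff := coeff_le_coeff_of_eval_le (N := P.natDegree) (natDegree_C_mul_le _ _)
    (natDegree_add_le_of_degree_le (natDegree_comp_le.trans (by simp)) (by simp)) hmid
  rw [coeff_add, comp_C_mul_X_coeff, coeff_C_mul, coeff_C_of_ne_zero (by omega), add_zero,
    coeff_natDegree] at hcoeff
  have hpow : (2 : ℝ) ^ 2 ≤ 2 ^ P.natDegree := pow_le_pow_right₀ one_le_two hdeg
  refine lt_of_le_of_ne (by nlinarith) (leadingCoeff_ne_zero.2 ?_).symm
  rintro rfl
  simp at hdeg

end UnivariateConvexity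

section WeightedRay

open MvPolynomial

/-- The restriction of a polynomial to the curve `t ↦ (v i * t ^ ω i)ᵢ`, as a polynomial in `t`.
For `ω = 1` this is the restriction to the line through the origin in direction `v`. -/
noncomputable def weightedRay {R σ : Type*} [CommSemiring R] (ω : σ → ℕ) (v : σ → R) :
    MvPolynomial σ R →ₐ[R] Polynomial R :=
  aeval fun i => Polynomial.C (v i) * Polynomial.X ^ ω i

section CommSemiring

variable {R σ : Type*} [CommSemiring R] (ω : σ → ℕ) (v : σ → R)

theorem eval_weightedRay (φ : MvPolynomial σ R) (t : R) :
    (weightedRay ω v φ).eval t = eval (fun i => v i * t ^ ω i) φ := by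
  have h : (Polynomial.aeval t).comp (weightedRay ω v) = aeval fun i => v i * t ^ ω i :=
    algHom_ext fun i => by simp [weightedRay]
  rw [← coe_aeval_eq_eval, ← Polynomial.coe_aeval_eq_eval]
  exact DFunLike.congr_fun h φ

theorem weightedRay_monomial (d : σ →₀ ℕ) (a : R) :
    weightedRay ω v (monomial d a) =
      Polynomial.monomial (Finsupp.weight ω d) (eval v (monomial d a)) := by
  simp only [weightedRay, aeval_monomial, mul_pow, ← map_pow, ← pow_mul, eval_monomial,
    Finsupp.prod_mul, Finsupp.weight_apply, smul_eq_mul, mul_comm (ω _),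
    ← Polynomial.C_mul_X_pow_eq_monomial, map_mul]
  rw [Finsupp.prod, Finsupp.prod, Finsupp.prod, Finsupp.sum, Finset.prod_pow_eq_pow_sum, map_prod,
    Polynomial.algebraMap_eq, mul_assoc]

theorem coeff_weightedRay (φ : MvPolynomial σ R) (k : ℕ) :
    (weightedRay ω v φ).coeff k = eval v (weightedHomogeneousComponent ω k φ) := by
  classical
  induction φ using induction_on' with
  | monomial d a =>
    rw [weightedRay_monomial, Polynomial.coeff_monomial]
    split_ifs with h
    · rw [weightedHomogeneousComponent_eq_self (isWeightedHomogeneous_monomial ω d a h)]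
    · rw [weightedHomogeneousComponent_eq_zero', map_zero]
      intro d' hd'
      rwa [Finset.mem_singleton.1 (support_monomial_subset hd')]
  | add p q hp hq => simp only [map_add, Polynomial.coeff_add, hp, hq]

theorem natDegree_weightedRay_le (φ : MvPolynomial σ R) :
    (weightedRay ω v φ).natDegree ≤ weightedTotalDegree ω φ :=
  Polynomial.natDegree_le_iff_coeff_eq_zero.2 fun k hk => by
    rw [coeff_weightedRay, weightedHomogeneousComponent_eq_zero k φ hk, map_zero]

variable {ω v} in
theorem weightedRay_eq_expand {k : ℕ} (hk : ∀ i, v i ≠ 0 → ω i = k) (φ : MvPolynomial σ R) :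
    weightedRay ω v φ = Polynomial.expand R k (weightedRay 1 v φ) := by
  have h : weightedRay ω v = (Polynomial.expand R k).comp (weightedRay 1 v) :=
    algHom_ext fun i => by
      rcases eq_or_ne (v i) 0 with hi | hi
      · simp [weightedRay, hi]
      · simp [weightedRay, hk i hi]
  rw [h, AlgHom.comp_apply]

variable {ω} in
theorem eval_mul_pow_of_isWeightedHomogeneous {H : MvPolynomial σ R} {N : ℕ}
    (hH : H.IsWeightedHomogeneous ω N) (t : R) :
    eval (fun i => v i * t ^ ω i) H = eval v H * t ^ N := by
  have h : weightedRay ω v H = Polynomial.monomial N (eval v H) := by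
    ext k
    rw [coeff_weightedRay, Polynomial.coeff_monomial]
    split_ifs with hk
    · rw [← hk, weightedHomogeneousComponent_eq_self hH]
    · rw [weightedHomogeneousComponent_eq_zero' _ _ fun d hd => ?_, map_zero]
      rwa [hH (mem_support_iff.1 hd)]
  rw [← eval_weightedRay, h, Polynomial.eval_monomial]

end CommSemiring

theorem weightedTotalDegree_le_of_natDegree_weightedRay_le {R σ : Type*} [CommRing R] [IsDomain R]
    [Infinite R] {ω : σ → ℕ} {φ : MvPolynomial σ R} {N : ℕ}
    (h : ∀ v, (weightedRay ω v φ).natDegree ≤ N) : weightedTotalDegree ω φ ≤ N := by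
  classical
  refine Finset.sup_le fun d hd => ?_
  by_contra! hlt
  have hzero : weightedHomogeneousComponent ω (Finsupp.weight ω d) φ = 0 := by
    refine MvPolynomial.funext fun v => ?_
    rw [← coeff_weightedRay, map_zero,
      Polynomial.coeff_eq_zero_of_natDegree_lt ((h v).trans_lt hlt)]
  have hcoeff := coeff_weightedHomogeneousComponent (w := ω) (Finsupp.weight ω d) φ d
  rw [hzero, coeff_zero, if_pos rfl] at hcoeff
  exact mem_support_iff.1 hd hcoeff.symm

section Convex

variable {σ : Type*} {φ : MvPolynomial σ ℝ}

theorem convexOn_eval_weightedRay_one (hφ : ConvexOn ℝ Set.univ fun x => eval x φ) (v : σ → ℝ) :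
    ConvexOn ℝ Set.univ fun t => (weightedRay 1 v φ).eval t := by
  simp only [eval_weightedRay, Pi.one_apply, pow_one, mul_comm (v _)]
  exact hφ.comp_linearMap (LinearMap.toSpanSingleton ℝ (σ → ℝ) v)

theorem convexOn_weightedHomogeneousComponent (hφ : ConvexOn ℝ Set.univ fun x => eval x φ)
    {ω : σ → ℕ} {N : ℕ} (hN : weightedTotalDegree ω φ ≤ N) :
    ConvexOn ℝ Set.univ fun x => eval x (weightedHomogeneousComponent ω N φ) := by
  have hdeg (v : σ → ℝ) := (natDegree_weightedRay_le ω v φ).trans hN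
  refine ⟨convex_univ, fun x _ y _ a b ha hb hab => ?_⟩
  beta_reduce
  rw [← coeff_weightedRay, ← coeff_weightedRay, ← coeff_weightedRay, ← Polynomial.coeff_smul,
    ← Polynomial.coeff_smul, ← Polynomial.coeff_add]
  refine coeff_le_coeff_of_eval_le (hdeg _) (Polynomial.natDegree_add_le_of_degree_le
    ((Polynomial.natDegree_smul_le _ _).trans (hdeg x))
    ((Polynomial.natDegree_smul_le _ _).trans (hdeg y))) fun t => ?_
  simp only [Polynomial.eval_add, Polynomial.eval_smul, eval_weightedRay]
  have hcurve : (fun i => (a • x + b • y) i * t ^ ω i) =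
      a • (fun i => x i * t ^ ω i) + b • fun i => y i * t ^ ω i := by
    ext i
    simp only [Pi.add_apply, Pi.smul_apply, smul_eq_mul]
    ring
  rw [hcurve]
  exact hφ.2 (Set.mem_univ _) (Set.mem_univ _) ha hb hab

theorem eval_indicator_nonpos_of_convexOn {H : MvPolynomial σ ℝ} {ω : σ → ℕ} {N : ℕ}
    (hconv : ConvexOn ℝ Set.univ fun x => eval x H) (hH : H.IsWeightedHomogeneous ω N)
    (hN : N ≠ 0) {a : σ → ℝ} (ha : eval a H ≤ 0) {k : ℕ} (hk : ∀ b, a b ≠ 0 → ω b ≤ k) :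
    eval ({b | ω b = k}.indicator a) H ≤ 0 := by
  have hH0 : eval 0 H = 0 := by simpa [hN] using eval_mul_pow_of_isWeightedHomogeneous 0 hH 0
  have hs (s : ℝ) (hs : s ∈ Set.Ioo 0 1) : eval (fun b => s ^ (k - ω b) * a b) H ≤ 0 := by
    have hle := hconv.2 (Set.mem_univ fun b => a b * s⁻¹ ^ ω b) (Set.mem_univ 0)
      (pow_nonneg hs.1.le k) (sub_nonneg.2 (pow_le_one₀ hs.1.le hs.2.le)) (by ring)
    simp only [smul_zero, mul_zero, add_zero, hH0, eval_mul_pow_of_isWeightedHomogeneous _ hH,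
      smul_eq_mul] at hle
    have hcurve : (fun b => s ^ (k - ω b) * a b) = s ^ k • fun b => a b * s⁻¹ ^ ω b := by
      ext b
      rcases eq_or_ne (a b) 0 with hb | hb
      · simp [hb]
      · rw [pow_sub₀ s hs.1.ne' (hk b hb), Pi.smul_apply, smul_eq_mul, inv_pow]
        ring
    rw [hcurve]
    exact hle.trans (mul_nonpos_of_nonneg_of_nonpos (pow_nonneg hs.1.le k)
      (mul_nonpos_of_nonpos_of_nonneg ha (pow_nonneg (inv_nonneg.2 hs.1.le) N)))
  have hlim : ({b | ω b = k}.indicator a) = fun b => 0 ^ (k - ω b) * a b := by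
    ext b
    rcases eq_or_ne (a b) 0 with hb | hb
    · simp [Set.indicator, hb]
    · have hle := hk b hb
      rcases hle.eq_or_lt with h | h
      · simp [Set.indicator, h]
      · simp [Set.indicator, h.ne, Nat.sub_ne_zero_of_lt h]
  have hcont : Continuous fun s : ℝ => eval (fun b => s ^ (k - ω b) * a b) H :=
    (continuous_eval H).comp (by fun_prop)
  rw [hlim]
  refine le_of_tendsto (x := nhdsWithin 0 (Set.Ioi 0))
    ((hcont.tendsto 0).mono_left nhdsWithin_le_nhds) ?_
  filter_upwards [Ioo_mem_nhdsGT one_pos] with s using hs s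

section Finite

variable [Finite σ] [DecidableEq σ]

theorem exists_natDegree_le_and_eval_weightedRay_le (hφ : ConvexOn ℝ Set.univ fun x => eval x φ)
    {ω : σ → ℕ} {N : ℕ}
    (hN : ∀ b, (weightedRay 1 (Pi.single b 1) φ).natDegree * ω b ≤ N) (v : σ → ℝ) :
    ∃ Q : Polynomial ℝ, Q.natDegree ≤ N ∧ ∀ t, (weightedRay ω v φ).eval t ≤ Q.eval t := by
  cases nonempty_fintype σ
  cases isEmpty_or_nonempty σ
  · refine ⟨weightedRay ω v φ, ?_, fun t => le_rfl⟩
    rw [eq_C_of_isEmpty φ, ← algebraMap_eq, AlgHom.commutes]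
    simp
  set n : ℝ := (Fintype.card σ : ℝ) with hn_def
  have hn : n ≠ 0 := Nat.cast_ne_zero.2 Fintype.card_ne_zero
  refine ⟨∑ b, n⁻¹ • (weightedRay 1 (Pi.single b 1) φ).comp
    (Polynomial.C (n * v b) * Polynomial.X ^ ω b), ?_, fun t => ?_⟩
  · refine Polynomial.natDegree_sum_le_of_forall_le _ _ fun b _ =>
      (Polynomial.natDegree_smul_le _ _).trans (Polynomial.natDegree_comp_le.trans ?_)
    exact (Nat.mul_le_mul_left _ (Polynomial.natDegree_C_mul_X_pow_le _ _)).trans (hN b)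
  · have hjensen := hφ.map_sum_le (t := Finset.univ) (w := fun _ => n⁻¹)
      (p := fun b => Pi.single b (n * v b * t ^ ω b)) (fun _ _ => by positivity)
      (by simp [hn_def]) fun _ _ => Set.mem_univ _
    have hsum : ∑ b, n⁻¹ • (Pi.single b (n * v b * t ^ ω b) : σ → ℝ) = fun b => v b * t ^ ω b := by
      simp_rw [← Pi.single_smul, smul_eq_mul, mul_assoc, inv_mul_cancel_left₀ hn]
      exact Finset.univ_sum_single _
    rw [hsum] at hjensen
    have haxis (b : σ) (r : ℝ) : (fun i => (Pi.single b 1 : σ → ℝ) i * r) = Pi.single b r := by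
      ext i
      simp [Pi.single_apply]
    rw [eval_weightedRay, Polynomial.eval_finsetSum]
    refine hjensen.trans_eq (Finset.sum_congr rfl fun b _ => ?_)
    simp only [Polynomial.eval_smul, Polynomial.eval_comp, Polynomial.eval_mul, Polynomial.eval_C,
      Polynomial.eval_pow, Polynomial.eval_X, eval_weightedRay, Pi.one_apply, pow_one, haxis]

theorem natDegree_weightedRay_le_of_convexOn (hφ : ConvexOn ℝ Set.univ fun x => eval x φ)
    {ω : σ → ℕ} {N : ℕ} (hN : ∀ b, (weightedRay 1 (Pi.single b 1) φ).natDegree * ω b ≤ N)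
    (v : σ → ℝ) : (weightedRay ω v φ).natDegree ≤ N := by
  obtain ⟨Q, hQ, hle⟩ := exists_natDegree_le_and_eval_weightedRay_le hφ hN v
  obtain ⟨Q', hQ', hle'⟩ := exists_natDegree_le_and_eval_weightedRay_le hφ hN (-v)
  refine natDegree_le_of_le_eval_of_eval_le (Q₁ := Polynomial.C (2 * eval 0 φ) - Q')
    ((Polynomial.natDegree_sub_le _ _).trans (by rwa [Polynomial.natDegree_C, Nat.zero_max])) hQ
    (fun t => ?_) hle
  have hmid := hφ.2 (Set.mem_univ fun i => v i * t ^ ω i) (Set.mem_univ fun i => (-v) i * t ^ ω i)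
    (by norm_num : (0 : ℝ) ≤ 1 / 2) (by norm_num : (0 : ℝ) ≤ 1 / 2) (by norm_num)
  have hzero : (1 / 2 : ℝ) • (fun i => v i * t ^ ω i) + (1 / 2 : ℝ) • (fun i => (-v) i * t ^ ω i) =
      0 := by
    ext i
    simp
  have ht := hle' t
  rw [eval_weightedRay] at ht
  simp only [hzero, smul_eq_mul] at hmid
  rw [Polynomial.eval_sub, Polynomial.eval_C, eval_weightedRay]
  linarith

theorem eval_weightedHomogeneousComponent_pos_of_convexOn
    (hφ : ConvexOn ℝ Set.univ fun x => eval x φ)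
    (hdeg : ∀ v : σ → ℝ, v ≠ 0 → 2 ≤ (weightedRay 1 v φ).natDegree)
    (hmin : ∀ (v : σ → ℝ) (b : σ), v b ≠ 0 →
      (weightedRay 1 (Pi.single b 1) φ).natDegree ≤ (weightedRay 1 v φ).natDegree)
    {ω : σ → ℕ} {N : ℕ} (hN : N ≠ 0)
    (hω : ∀ b, (weightedRay 1 (Pi.single b 1) φ).natDegree * ω b = N) {a : σ → ℝ} (ha : a ≠ 0) :
    0 < eval a (weightedHomogeneousComponent ω N φ) := by
  have hray (v : σ → ℝ) : (weightedRay ω v φ).natDegree ≤ N :=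
    natDegree_weightedRay_le_of_convexOn hφ (fun b => (hω b).le) v
  by_contra! hle
  obtain ⟨b₀, hb₀, hmax⟩ : ∃ b₀, a b₀ ≠ 0 ∧ ∀ b, a b ≠ 0 → ω b ≤ ω b₀ := by
    obtain ⟨b, hb⟩ := Function.ne_iff.1 ha
    exact Set.exists_max_image {b | a b ≠ 0} ω (Set.toFinite _) ⟨b, hb⟩
  set c := {b | ω b = ω b₀}.indicator a
  have hc : c b₀ ≠ 0 := by simpa [c] using hb₀
  have hc_nonpos : eval c (weightedHomogeneousComponent ω N φ) ≤ 0 :=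
    eval_indicator_nonpos_of_convexOn
      (convexOn_weightedHomogeneousComponent hφ
        (weightedTotalDegree_le_of_natDegree_weightedRay_le hray))
      (weightedHomogeneousComponent_isWeightedHomogeneous N φ) hN hle hmax
  have hexpand := weightedRay_eq_expand (ω := ω) (v := c) (k := ω b₀)
    (fun b hb => Set.mem_of_indicator_ne_zero (s := {b | ω b = ω b₀}) hb) φ
  have hω₀ : 0 < ω b₀ := Nat.pos_of_ne_zero fun h => hN (by rw [← hω b₀, h, mul_zero])
  have hdeg_c : (weightedRay 1 c φ).natDegree = (weightedRay 1 (Pi.single b₀ 1) φ).natDegree := by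
    refine (Nat.le_of_mul_le_mul_right ?_ hω₀).antisymm (hmin c b₀ hc)
    rw [hω b₀, ← Polynomial.natDegree_expand, ← hexpand]
    exact hray c
  rw [← coeff_weightedRay, hexpand, ← hω b₀, ← hdeg_c, Polynomial.coeff_expand_mul hω₀,
    Polynomial.coeff_natDegree] at hc_nonpos
  exact hc_nonpos.not_gt <| leadingCoeff_pos_of_convexOn (convexOn_eval_weightedRay_one hφ c)
    (hdeg c (Function.ne_iff.2 ⟨b₀, hc⟩))

end Finite

end Convex

end WeightedRay

section FinitePoints

open MvPolynomial

variable {K σ : Type*} [Field K] [LinearOrder K] [IsStrictOrderedRing K] [Algebra ℝ K]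
  {D ω : σ → ℕ} {N : ℕ}

theorem exists_finite_mul_eq_prod_pow [Fintype σ] (hN : N ≠ 0) (hD : ∀ b, D b * ω b = N) {M : K}
    (hM : 0 < M) (hM_mk : ArchimedeanClass.mk M < 0) {y : σ → K} (hy : ∀ b, 0 ≤ y b)
    {q : σ → finiteSubalgebra K} (hq : ∀ b, q b * M = y b ^ D b) {c : σ → ℝ} (hc : ∀ b, 0 ≤ c b)
    (hcq : ∀ b, c b ^ D b = stdPartAlgHom K (q b)) {d : σ →₀ ℕ} (hd : Finsupp.weight ω d ≤ N) :
    ∃ z : finiteSubalgebra K, z * M = ∏ b, y b ^ d b ∧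
      stdPartAlgHom K z = if Finsupp.weight ω d = N then ∏ b, c b ^ d b else 0 := by
  have hinv : 0 < ArchimedeanClass.mk M⁻¹ := by
    rw [ArchimedeanClass.mk_inv, LinearOrderedAddCommGroupWithTop.neg_pos]
    exact Or.inl hM_mk
  set u : finiteSubalgebra K := ⟨M⁻¹, mem_finiteSubalgebra.2 hinv.le⟩
  have hu : stdPartAlgHom K u = 0 := ArchimedeanClass.stdPart_eq_zero.2 hinv.ne'
  have hexp (b : σ) : D b * (d b * ω b) = d b * N := by rw [← hD b]; ring
  have hweight : Finsupp.weight ω d = ∑ b, d b * ω b := by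
    rw [Finsupp.weight_apply, Finsupp.sum_fintype _ _ (by simp)]; rfl
  set P := (∏ b, q b ^ (d b * ω b)) * u ^ (N - Finsupp.weight ω d) with hP_def
  have hP : ((∏ b, y b ^ d b) / M) ^ N = (P : K) := by
    have hy_eq (b : σ) : y b ^ (d b * N) = (q b : K) ^ (d b * ω b) * M ^ (d b * ω b) := by
      rw [← hexp, pow_mul, ← hq, mul_pow]
    simp only [P, u, MulMemClass.coe_mul, SubmonoidClass.coe_pow, SubmonoidClass.coe_finsetProd,
      div_pow, ← Finset.prod_pow, ← pow_mul, hy_eq, Finset.prod_mul_distrib,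
      Finset.prod_pow_eq_pow_sum, ← hweight]
    rw [inv_pow, pow_sub₀ _ hM.ne' hd, mul_inv, inv_inv, div_eq_mul_inv]
    ring
  have hz : (∏ b, y b ^ d b) / M ∈ finiteSubalgebra K := by
    have hP_mk := mem_finiteSubalgebra.1 P.2
    rw [← hP, ArchimedeanClass.mk_pow] at hP_mk
    exact mem_finiteSubalgebra.2 ((nsmul_nonneg_iff hN).1 hP_mk)
  refine ⟨⟨_, hz⟩, div_mul_cancel₀ _ hM.ne', ?_⟩
  have hpow : stdPartAlgHom K ⟨_, hz⟩ ^ N =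
      (∏ b, c b ^ d b) ^ N * 0 ^ (N - Finsupp.weight ω d) := by
    rw [← map_pow, show (⟨_, hz⟩ : finiteSubalgebra K) ^ N = P from Subtype.ext hP, hP_def]
    simp only [map_mul, map_prod, map_pow, hu, ← hcq, ← pow_mul, ← Finset.prod_pow, hexp]
  have hz_nonneg : 0 ≤ stdPartAlgHom K ⟨_, hz⟩ := ArchimedeanClass.stdPart_nonneg
    (div_nonneg (Finset.prod_nonneg fun b _ => pow_nonneg (hy b) _) hM.le)
  split_ifs with hw
  · rw [hw, Nat.sub_self, pow_zero, mul_one] at hpow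
    exact (pow_left_inj₀ hz_nonneg (Finset.prod_nonneg fun b _ => pow_nonneg (hc b) _) hN).1 hpow
  · rw [zero_pow (by omega), mul_zero] at hpow
    exact pow_eq_zero_iff hN |>.1 hpow

theorem exists_finite_mul_eq_abs_pow_of_mk_neg [Finite σ] (hD : ∀ b, D b ≠ 0) {ξ : σ → K}
    {b₁ : σ} (hb₁ : ArchimedeanClass.mk (ξ b₁) < 0) :
    ∃ M : K, 0 < M ∧ ArchimedeanClass.mk M < 0 ∧ ∃ q : σ → finiteSubalgebra K,
      (∀ b, q b * M = |ξ b| ^ D b) ∧ ∃ b₀, q b₀ = 1 := by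
  have : Nonempty σ := ⟨b₁⟩
  obtain ⟨b₀, hmax⟩ := Finite.exists_max fun b => |ξ b| ^ D b
  set M := |ξ b₀| ^ D b₀
  have hM_mk : ArchimedeanClass.mk M < 0 := by
    refine lt_of_le_of_lt (ArchimedeanClass.mk_le_mk_of_abs (a := |ξ b₁| ^ D b₁) ?_) ?_
    · rw [abs_pow, abs_abs]
      exact (hmax b₁).trans (le_abs_self M)
    · rw [ArchimedeanClass.mk_pow, ArchimedeanClass.mk_abs]
      exact nsmul_neg hb₁ (hD b₁)
  have hM : 0 < M := (by positivity : 0 ≤ M).lt_of_ne' fun h => by simp [h] at hM_mk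
  have hfin (b : σ) : |ξ b| ^ D b / M ∈ finiteSubalgebra K := by
    refine mem_finiteSubalgebra.2 <|
      ArchimedeanClass.mk_one.symm.trans_le (ArchimedeanClass.mk_le_mk_of_abs ?_)
    rw [abs_one, abs_of_nonneg (by positivity)]
    exact (div_le_one hM).2 (hmax b)
  exact ⟨M, hM, hM_mk, fun b => ⟨_, hfin b⟩, fun b => div_mul_cancel₀ _ hM.ne',
    b₀, Subtype.ext (div_self hM.ne')⟩

/- At an infinite point `ξ`, measured by `M = max |ξ b| ^ D b`, the monomials of weight `N` look
like those of a real point `a ≠ 0`, and those of smaller weight are negligible. -/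
theorem exists_finite_mul_eq_prod_pow_of_mk_neg [Fintype σ] (hN : N ≠ 0)
    (hD : ∀ b, D b * ω b = N) {ξ : σ → K} {b₁ : σ} (hb₁ : ArchimedeanClass.mk (ξ b₁) < 0) :
    ∃ M : K, 0 < M ∧ ∃ a : σ → ℝ, a ≠ 0 ∧ ∀ d : σ →₀ ℕ, Finsupp.weight ω d ≤ N →
      ∃ z : finiteSubalgebra K, z * M = ∏ b, ξ b ^ d b ∧
        stdPartAlgHom K z = if Finsupp.weight ω d = N then ∏ b, a b ^ d b else 0 := by
  have hD_ne (b : σ) : D b ≠ 0 := left_ne_zero_of_mul (hD b ▸ hN)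
  obtain ⟨M, hM, hM_mk, q, hq, b₀, hq₀⟩ := exists_finite_mul_eq_abs_pow_of_mk_neg hD_ne hb₁
  have hroot (b : σ) : ∃ c : ℝ, 0 ≤ c ∧ c ^ D b = stdPartAlgHom K (q b) := by
    have hq_nonneg : 0 ≤ stdPartAlgHom K (q b) := ArchimedeanClass.stdPart_nonneg <|
      nonneg_of_mul_nonneg_left ((by positivity : 0 ≤ |ξ b| ^ D b).trans_eq (hq b).symm) hM
    exact ⟨_, Real.rpow_nonneg hq_nonneg _, Real.rpow_inv_natCast_pow hq_nonneg (hD_ne b)⟩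
  choose c hc hcq using hroot
  refine ⟨M, hM, fun b => SignType.sign (ξ b) * c b, fun h => ?_, fun d hd => ?_⟩
  · have hξ₀ : ξ b₀ ≠ 0 := fun h₀ => by simpa [h₀, hD_ne b₀, hq₀, hM.ne'] using hq b₀
    have hsign : (SignType.sign (ξ b₀) : ℝ) ≠ 0 := by
      rcases hξ₀.lt_or_gt with hneg | hpos
      · simp [sign_neg hneg]
      · simp [sign_pos hpos]
    have hc₀ : c b₀ = 0 := (mul_eq_zero.1 (congr_fun h b₀)).resolve_left hsign
    simpa [hc₀, hq₀, hD_ne b₀] using hcq b₀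
  · obtain ⟨z, hzM, hz⟩ :=
      exists_finite_mul_eq_prod_pow hN hD hM hM_mk (fun b => abs_nonneg (ξ b)) hq hc hcq hd
    refine ⟨(∏ b, (SignType.sign (ξ b) : ℝ) ^ d b) • z, ?_, ?_⟩
    · rw [Subalgebra.coe_smul, smul_mul_assoc, hzM, Algebra.smul_def, map_prod,
        ← Finset.prod_mul_distrib]
      refine Finset.prod_congr rfl fun b _ => ?_
      rw [map_pow, SignType.map_cast, ← mul_pow, sign_mul_abs]
    · rw [map_smul, hz, smul_ite, smul_zero, smul_eq_mul, ← Finset.prod_mul_distrib]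
      simp only [mul_pow]

theorem mk_nonneg_of_aeval_nonpos [Finite σ] (hN : N ≠ 0) (hD : ∀ b, D b * ω b = N)
    {ψ : MvPolynomial σ ℝ} (hψ : weightedTotalDegree ω ψ ≤ N)
    (hpos : ∀ a : σ → ℝ, a ≠ 0 → 0 < eval a (weightedHomogeneousComponent ω N ψ)) {ξ : σ → K}
    (hξ : aeval ξ ψ ≤ 0) (b : σ) : 0 ≤ ArchimedeanClass.mk (ξ b) := by
  cases nonempty_fintype σ
  by_contra! hb
  obtain ⟨M, hM, a, ha, hmonomial⟩ := exists_finite_mul_eq_prod_pow_of_mk_neg hN hD hb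
  choose! z hzM hz using hmonomial
  have hweight {d : σ →₀ ℕ} (hd : d ∈ ψ.support) : Finsupp.weight ω d ≤ N :=
    (le_weightedTotalDegree ω hd).trans hψ
  set s : finiteSubalgebra K := ∑ d ∈ ψ.support, ψ.coeff d • z d
  have hsM : (s : K) * M = aeval ξ ψ := by
    simp only [s, aeval_def, eval₂_eq', AddSubmonoidClass.coe_finsetSum, Finset.sum_mul]
    refine Finset.sum_congr rfl fun d hd => ?_
    rw [Subalgebra.coe_smul, smul_mul_assoc, hzM d (hweight hd), Algebra.smul_def]
  have hs : stdPartAlgHom K s = eval a (weightedHomogeneousComponent ω N ψ) := by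
    simp only [s, map_sum, map_smul, weightedHomogeneousComponent_apply, Finset.sum_filter]
    refine Finset.sum_congr rfl fun d hd => ?_
    rw [hz d (hweight hd)]
    split_ifs
    · rw [eval_monomial, Finsupp.prod_fintype _ _ (fun _ => pow_zero _), smul_eq_mul]
    · rw [smul_zero, map_zero]
  have hs_nonpos : stdPartAlgHom K s ≤ 0 :=
    ArchimedeanClass.stdPart_nonpos (nonpos_of_mul_nonpos_left (hsM.trans_le hξ) hM)
  exact ((hpos a ha).trans_eq hs.symm).not_ge hs_nonpos

end FinitePoints

section LinearSubstitution

open MvPolynomial Matrix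

theorem exists_det_ne_zero_forall_le {R ι : Type*} [Fintype ι] [DecidableEq ι] [CommRing R]
    [IsDomain R] (d : (ι → R) → ℕ) :
    ∃ U : Matrix ι ι R, U.det ≠ 0 ∧ ∀ (c : ι → R) (b : ι), c b ≠ 0 → d (U b) ≤ d (c ᵥ* U) := by
  classical
  have hne : ∃ m : ℕ, ∃ U : Matrix ι ι R, U.det ≠ 0 ∧ ∑ b, d (U b) = m := ⟨_, 1, by simp, rfl⟩
  obtain ⟨U, hU, hm⟩ := Nat.find_spec hne
  refine ⟨U, hU, fun c b hcb => ?_⟩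
  by_contra! hlt
  have hdet : (U.updateRow b (c ᵥ* U)).det ≠ 0 := by
    rw [vecMul_eq_sum, det_updateRow_sum, smul_eq_mul]
    exact mul_ne_zero hcb hU
  refine (hm.trans_le (Nat.find_min' hne ⟨_, hdet, rfl⟩)).not_gt ?_
  refine Finset.sum_lt_sum (fun k _ => ?_) ⟨b, Finset.mem_univ b, by rwa [updateRow_self]⟩
  rcases eq_or_ne k b with rfl | hk
  · rw [updateRow_self]
    exact hlt.le
  · rw [updateRow_ne hk]

/-- The substitution `φ ↦ φ(x U)` of linear forms into a polynomial, where `x` is the row vector of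
the new variables. -/
noncomputable def linearSubst {R ι σ : Type*} [CommSemiring R] [Fintype ι] (U : Matrix ι σ R) :
    MvPolynomial σ R →ₐ[R] MvPolynomial ι R :=
  aeval fun i => ∑ b, X b * C (U b i)

theorem aeval_linearSubst {R S ι σ : Type*} [CommSemiring R] [CommSemiring S] [Algebra R S]
    [Fintype ι] (U : Matrix ι σ R) (x : ι → S) (φ : MvPolynomial σ R) :
    aeval x (linearSubst U φ) = aeval (x ᵥ* U.map (algebraMap R S)) φ := by
  have h : (aeval x).comp (linearSubst U) = aeval (x ᵥ* U.map (algebraMap R S)) :=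
    algHom_ext fun i => by simp [linearSubst, vecMul, dotProduct]
  exact DFunLike.congr_fun h φ

theorem eval_linearSubst {R ι σ : Type*} [CommSemiring R] [Fintype ι] (U : Matrix ι σ R)
    (x : ι → R) (φ : MvPolynomial σ R) : eval x (linearSubst U φ) = eval (x ᵥ* U) φ :=
  aeval_linearSubst U x φ

theorem weightedRay_one_linearSubst {R ι σ : Type*} [CommSemiring R] [Fintype ι]
    (U : Matrix ι σ R) (v : ι → R) (φ : MvPolynomial σ R) :
    weightedRay 1 v (linearSubst U φ) = weightedRay 1 (v ᵥ* U) φ := by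
  rw [weightedRay, aeval_linearSubst, weightedRay]
  congr 2
  ext1 i
  simp only [vecMul, dotProduct, map_apply, Polynomial.algebraMap_eq, Pi.one_apply, pow_one,
    map_sum, map_mul, Finset.sum_mul]
  exact Finset.sum_congr rfl fun b _ => by ring

theorem convexOn_linearSubst {ι σ : Type*} [Fintype ι] {φ : MvPolynomial σ ℝ}
    (hφ : ConvexOn ℝ Set.univ fun x => eval x φ) (U : Matrix ι σ ℝ) :
    ConvexOn ℝ Set.univ fun x => eval x (linearSubst U φ) := by
  simp only [eval_linearSubst]
  exact hφ.comp_linearMap U.vecMulLinear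

theorem exists_linearSubst_weightedTotalDegree_le {σ : Type*} [Fintype σ] [DecidableEq σ]
    {φ : MvPolynomial σ ℝ} (hφ : ConvexOn ℝ Set.univ fun x => eval x φ)
    (hdeg : ∀ v : σ → ℝ, v ≠ 0 → 2 ≤ (weightedRay 1 v φ).natDegree) :
    ∃ U : Matrix σ σ ℝ, U.det ≠ 0 ∧ ∃ (D ω : σ → ℕ) (N : ℕ), N ≠ 0 ∧ (∀ b, D b * ω b = N) ∧
      weightedTotalDegree ω (linearSubst U φ) ≤ N ∧
      ∀ a : σ → ℝ, a ≠ 0 → 0 < eval a (weightedHomogeneousComponent ω N (linearSubst U φ)) := by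
  obtain ⟨U, hU, hmin⟩ := exists_det_ne_zero_forall_le fun v => (weightedRay 1 v φ).natDegree
  set ψ := linearSubst U φ
  set D : σ → ℕ := fun b => (weightedRay 1 (Pi.single b 1) ψ).natDegree
  have hψ_ray (v : σ → ℝ) (hv : v ≠ 0) : 2 ≤ (weightedRay 1 v ψ).natDegree := by
    rw [weightedRay_one_linearSubst]
    exact hdeg _ fun h => hv (eq_zero_of_vecMul_eq_zero hU h)
  have hψ_min (v : σ → ℝ) (b : σ) (hv : v b ≠ 0) : D b ≤ (weightedRay 1 v ψ).natDegree := by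
    simp only [D, ψ, weightedRay_one_linearSubst, single_one_vecMul]
    exact hmin v b hv
  set ω : σ → ℕ := fun b => ∏ k ∈ Finset.univ.erase b, D k
  have hω (b : σ) : D b * ω b = ∏ k, D k := Finset.mul_prod_erase _ _ (Finset.mem_univ b)
  have hN : ∏ k, D k ≠ 0 := Finset.prod_ne_zero_iff.2 fun b _ =>
    (two_pos.trans_le (hψ_ray _ (Pi.single_ne_zero_iff.2 one_ne_zero))).ne'
  have hψ := convexOn_linearSubst hφ U
  exact ⟨U, hU, D, ω, _, hN, hω, weightedTotalDegree_le_of_natDegree_weightedRay_le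
    (natDegree_weightedRay_le_of_convexOn hψ fun b => (hω b).le),
    fun a => eval_weightedHomogeneousComponent_pos_of_convexOn hψ hψ_ray hψ_min hN hω⟩

theorem mk_nonneg_of_convexOn_of_nonpos {σ : Type*} [Finite σ] {φ : MvPolynomial σ ℝ}
    (hφ : ConvexOn ℝ Set.univ fun x => eval x φ)
    (hdeg : ∀ v : σ → ℝ, v ≠ 0 → 2 ≤ (weightedRay 1 v φ).natDegree)
    {K : Type*} [Field K] [LinearOrder K] [IsStrictOrderedRing K] [Algebra ℝ K]
    (ρ : MvPolynomial σ ℝ →ₐ[ℝ] K) (hρ : ρ φ ≤ 0) (r : MvPolynomial σ ℝ) :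
    0 ≤ ArchimedeanClass.mk (ρ r) := by
  classical
  cases nonempty_fintype σ
  obtain ⟨U, hU, D, ω, N, hN, hω, hdeg_le, hpos⟩ :=
    exists_linearSubst_weightedTotalDegree_le hφ hdeg
  set ξ : σ → K := (ρ ∘ X) ᵥ* U⁻¹.map (algebraMap ℝ K)
  have hρ_eq (s : MvPolynomial σ ℝ) : aeval ξ (linearSubst U s) = ρ s := by
    rw [aeval_linearSubst, vecMul_vecMul, ← Matrix.map_mul,
      nonsing_inv_mul U (isUnit_iff_ne_zero.2 hU), Matrix.map_one _ (map_zero _) (map_one _),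
      vecMul_one, ← aeval_unique]
  have hξ (b : σ) : ξ b ∈ finiteSubalgebra K := mem_finiteSubalgebra.2 <|
    mk_nonneg_of_aeval_nonpos hN hω hdeg_le hpos (hρ_eq φ ▸ hρ) b
  rw [← hρ_eq r, ← mem_finiteSubalgebra,
    Subalgebra.mvPolynomial_aeval_coe (finiteSubalgebra K) fun b => ⟨ξ b, hξ b⟩]
  exact Subtype.property _

end LinearSubstitution

section Taylor

open MvPolynomial Matrix

theorem eval_derivative_derivative_nonneg_of_convexOn {P : Polynomial ℝ}
    (hP : ConvexOn ℝ Set.univ fun t => P.eval t) (t : ℝ) :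
    0 ≤ P.derivative.derivative.eval t := by
  have hmono := monotoneOn_univ.1 (hP.monotoneOn_deriv fun t _ => P.differentiableAt)
  have hderiv : (deriv fun t => P.eval t) = fun t => P.derivative.eval t :=
    funext fun _ => P.deriv
  rw [hderiv] at hmono
  rw [← Polynomial.deriv]
  exact hmono.deriv_nonneg

theorem integral_one_sub_mul_eval_derivative_derivative (P : Polynomial ℝ) :
    ∫ t in 0..1, (1 - t) * P.derivative.derivative.eval t =
      P.eval 1 - P.eval 0 - P.derivative.eval 0 := by
  have hderiv (t : ℝ) : HasDerivAt (fun t => (1 - t) * P.derivative.eval t + P.eval t)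
      ((1 - t) * P.derivative.derivative.eval t) t :=
    ((((hasDerivAt_id' t).const_sub 1).mul (P.derivative.hasDerivAt t)).add
      (P.hasDerivAt t)).congr_deriv (by ring)
  rw [intervalIntegral.integral_eq_sub_of_hasDerivAt (fun t _ => hderiv t)
    (Continuous.intervalIntegrable (by fun_prop) _ _)]
  ring

section CommRing

variable {R σ : Type*} [CommRing R]

/-- The derivative in the direction of a constant vector `v`. -/
noncomputable def directionalDeriv (v : σ → R) :
    Derivation R (MvPolynomial σ R) (MvPolynomial σ R) :=
  mkDerivation R fun i => C (v i)

theorem directionalDeriv_eq_sum [Fintype σ] (v : σ → R) (φ : MvPolynomial σ R) :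
    directionalDeriv v φ = ∑ i, v i • pderiv i φ := by
  classical
  induction φ using induction_on with
  | C a => simp [directionalDeriv]
  | add p q hp hq => simp only [map_add, hp, hq, smul_add, Finset.sum_add_distrib]
  | mul_X p i hp =>
    simp only [Derivation.leibniz, hp, smul_add, Finset.sum_add_distrib, smul_comm (v _),
      ← Finset.smul_sum]
    simp [directionalDeriv, pderiv_X, Pi.single_apply, C_eq_smul_one]

theorem derivative_weightedRay_one (v : σ → R) (φ : MvPolynomial σ R) :
    (weightedRay 1 v φ).derivative = weightedRay 1 v (directionalDeriv v φ) := by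
  induction φ using induction_on with
  | C a => simp [directionalDeriv, weightedRay]
  | add p q hp hq => simp only [map_add, hp, hq]
  | mul_X p i hp =>
    simp only [map_mul, Polynomial.derivative_mul, hp, Derivation.leibniz, map_add, smul_eq_mul]
    simp [directionalDeriv, weightedRay]
    ring

theorem pderiv_pderiv_comm (i j : σ) (φ : MvPolynomial σ R) :
    pderiv i (pderiv j φ) = pderiv j (pderiv i φ) := by
  classical
  have h : ⁅pderiv i, pderiv j⁆ = (0 : Derivation R (MvPolynomial σ R) (MvPolynomial σ R)) :=
    derivation_ext fun k => by
      rw [Derivation.commutator_apply]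
      simp [pderiv_X, Pi.single_apply, apply_ite]
  rw [← sub_eq_zero, ← Derivation.commutator_apply, h, Derivation.zero_apply]

/-- The substitution `φ ↦ φ(X + y)`. -/
noncomputable def shift (y : σ → R) : MvPolynomial σ R →ₐ[R] MvPolynomial σ R :=
  aeval fun i => X i + C (y i)

theorem eval_shift (x y : σ → R) (φ : MvPolynomial σ R) :
    eval x (shift y φ) = eval (x + y) φ := by
  have h : (aeval x).comp (shift y) = aeval (x + y) :=
    algHom_ext fun i => by simp [shift]
  exact DFunLike.congr_fun h φ

theorem shift_neg_shift (y : σ → R) (φ : MvPolynomial σ R) : shift (-y) (shift y φ) = φ := by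
  have h : (shift (-y)).comp (shift y) = AlgHom.id R _ :=
    algHom_ext fun i => by simp [shift]
  exact DFunLike.congr_fun h φ

theorem directionalDeriv_shift (v y : σ → R) (φ : MvPolynomial σ R) :
    directionalDeriv v (shift y φ) = shift y (directionalDeriv v φ) := by
  induction φ using induction_on with
  | C a => simp [directionalDeriv, shift]
  | add p q hp hq => simp only [map_add, hp, hq]
  | mul_X p i hp =>
    simp only [map_mul, hp, Derivation.leibniz, map_add, smul_eq_mul]
    simp [directionalDeriv, shift]

theorem eval_zero_weightedRay_one (v : σ → R) (φ : MvPolynomial σ R) :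
    (weightedRay 1 v φ).eval 0 = eval 0 φ := by
  rw [eval_weightedRay]
  simp only [Pi.one_apply, pow_one, mul_zero]
  rfl

theorem eval_derivative_derivative_weightedRay_shift (x v : σ → R) (φ : MvPolynomial σ R) :
    (weightedRay 1 v (shift x φ)).derivative.derivative.eval 0 =
      eval x (directionalDeriv v (directionalDeriv v φ)) := by
  rw [derivative_weightedRay_one, derivative_weightedRay_one, eval_zero_weightedRay_one,
    directionalDeriv_shift, directionalDeriv_shift, eval_shift, zero_add]

end CommRing

variable {σ : Type*} {φ : MvPolynomial σ ℝ}

theorem convexOn_eval_shift (hφ : ConvexOn ℝ Set.univ fun x => eval x φ) (y : σ → ℝ) :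
    ConvexOn ℝ Set.univ fun x => eval x (shift y φ) := by
  simp only [eval_shift]
  exact hφ.translate_left y

theorem eval_directionalDeriv_directionalDeriv_nonneg_of_convexOn
    (hφ : ConvexOn ℝ Set.univ fun x => eval x φ) (x v : σ → ℝ) :
    0 ≤ eval x (directionalDeriv v (directionalDeriv v φ)) := by
  rw [← eval_derivative_derivative_weightedRay_shift]
  exact eval_derivative_derivative_nonneg_of_convexOn
    (convexOn_eval_weightedRay_one (convexOn_eval_shift hφ x) v) 0

theorem two_le_natDegree_weightedRay_of_eval_ne_zero {v : σ → ℝ}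
    (h : eval 0 (directionalDeriv v (directionalDeriv v φ)) ≠ 0) :
    2 ≤ (weightedRay 1 v φ).natDegree := by
  by_contra! hlt
  refine h ?_
  rw [← eval_zero_weightedRay_one v, ← derivative_weightedRay_one, ← derivative_weightedRay_one,
    show Polynomial.derivative (Polynomial.derivative (weightedRay 1 v φ)) = 0 from
      Polynomial.iterate_derivative_eq_zero hlt, Polynomial.eval_zero]

theorem eval_zero_directionalDeriv_eq_zero_of_forall_le (hmin : ∀ x, eval 0 φ ≤ eval x φ)
    (v : σ → ℝ) : eval 0 (directionalDeriv v φ) = 0 := by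
  have hlocal : IsLocalMin (fun t => (weightedRay 1 v φ).eval t) 0 :=
    Filter.Eventually.of_forall fun t => by
      beta_reduce
      rw [eval_zero_weightedRay_one, eval_weightedRay]
      exact hmin _
  rw [← eval_zero_weightedRay_one v, ← derivative_weightedRay_one, ← Polynomial.deriv]
  exact hlocal.deriv_eq_zero

theorem contDiff_eval_mvPolynomial [Fintype σ] (φ : MvPolynomial σ ℝ) {n : WithTop ℕ∞} :
    ContDiff ℝ n fun x => eval x φ :=
  (AnalyticOnNhd.eval_mvPolynomial φ).contDiff

theorem fderiv_eval_mvPolynomial [Finite σ] (φ : MvPolynomial σ ℝ) (x v : σ → ℝ) :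
    fderiv ℝ (fun y => eval y φ) x v = eval x (directionalDeriv v φ) := by
  cases nonempty_fintype σ
  have hline := (weightedRay 1 v (shift x φ)).deriv (x := 0)
  rw [derivative_weightedRay_one, eval_zero_weightedRay_one, directionalDeriv_shift, eval_shift,
    zero_add] at hline
  have hdiff := (contDiff_eval_mvPolynomial φ (n := 1)).differentiable one_ne_zero x
  rw [← hdiff.lineDeriv_eq_fderiv, ← hline, lineDeriv]
  congr 1
  ext t
  rw [eval_weightedRay, eval_shift]
  congr 2
  ext i
  simp only [Pi.add_apply, Pi.smul_apply, smul_eq_mul, Pi.one_apply, pow_one]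
  ring

theorem iteratedFDeriv_two_eval_mvPolynomial [Fintype σ] (φ : MvPolynomial σ ℝ) (x v : σ → ℝ) :
    iteratedFDeriv ℝ 2 (fun y => eval y φ) x ![v, v] =
      eval x (directionalDeriv v (directionalDeriv v φ)) := by
  have hdiff := ((contDiff_eval_mvPolynomial φ (n := 2)).fderiv_right (m := 1)
    le_rfl).differentiable one_ne_zero x
  rw [iteratedFDeriv_two_apply, ← fderiv_eval_mvPolynomial]
  simp only [← fderiv_eval_mvPolynomial]
  rw [fderiv_clm_apply hdiff (differentiableAt_const v)]
  simp

/-- The operator `q ↦ ∫₀¹ (1 - t) q(tX) dt`, which turns the Hessian of a polynomial into the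
quadratic form of its second-order Taylor remainder at the origin. -/
noncomputable def rayAverage : MvPolynomial σ ℝ →ₗ[ℝ] MvPolynomial σ ℝ :=
  (basisMonomials σ ℝ).constr ℝ fun d => ((d.degree + 1) * (d.degree + 2) : ℝ)⁻¹ • monomial d 1

theorem rayAverage_monomial (d : σ →₀ ℕ) (a : ℝ) :
    rayAverage (monomial d a) = ((d.degree + 1) * (d.degree + 2) : ℝ)⁻¹ • monomial d a := by
  have hone : rayAverage (monomial d 1) = ((d.degree + 1) * (d.degree + 2) : ℝ)⁻¹ • monomial d 1 :=
    (basisMonomials σ ℝ).constr_basis ℝ _ d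
  rw [← mul_one a, ← smul_eq_mul, ← smul_monomial, map_smul, hone, smul_comm]

theorem eval_rayAverage (x : σ → ℝ) (q : MvPolynomial σ ℝ) :
    eval x (rayAverage q) = ∫ t in 0..1, (1 - t) * (weightedRay 1 x q).eval t := by
  induction q using induction_on' with
  | monomial d a =>
    rw [rayAverage_monomial, weightedRay_monomial, smul_eval]
    set k := Finsupp.weight (1 : σ → ℕ) d
    set c := eval x (monomial d a)
    have hk : (d.degree : ℝ) = k := by rw [Finsupp.degree_eq_weight_one]; rfl
    set P := Polynomial.monomial (k + 2) (((k + 1) * (k + 2) : ℝ)⁻¹ * c)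
    have hP : P.derivative.derivative = Polynomial.monomial k c := by
      rw [Polynomial.derivative_monomial, Polynomial.derivative_monomial]
      congr 1
      push_cast
      field_simp
    rw [← hP, integral_one_sub_mul_eval_derivative_derivative, hk]
    simp [P]
  | add p q hp hq =>
    simp only [map_add, hp, hq, Polynomial.eval_add, mul_add]
    rw [intervalIntegral.integral_add] <;>
      exact Continuous.intervalIntegrable (by fun_prop) _ _

/-- The matrix `∫₀¹ (1 - t) ∇²φ(tX) dt` of the integral form of Taylor's formula at the origin. -/
noncomputable def taylorMatrix (φ : MvPolynomial σ ℝ) : Matrix σ σ (MvPolynomial σ ℝ) :=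
  of fun i j => rayAverage (pderiv j (pderiv i φ))

theorem isSymm_taylorMatrix (φ : MvPolynomial σ ℝ) : (taylorMatrix φ).IsSymm :=
  IsSymm.ext fun i j => by simp only [taylorMatrix, of_apply, pderiv_pderiv_comm]

theorem dotProduct_taylorMatrix_mulVec [Fintype σ] (φ : MvPolynomial σ ℝ) (x v : σ → ℝ) :
    v ⬝ᵥ (taylorMatrix φ).map (eval x) *ᵥ v =
      eval x (rayAverage (directionalDeriv v (directionalDeriv v φ))) := by
  simp only [directionalDeriv_eq_sum, map_sum, map_smul, Derivation.map_smul, smul_eval,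
    dotProduct, mulVec, map_apply, taylorMatrix, of_apply, Finset.mul_sum]
  simp only [mul_comm]

theorem dotProduct_self_taylorMatrix_mulVec [Fintype σ] (φ : MvPolynomial σ ℝ) (x : σ → ℝ) :
    x ⬝ᵥ (taylorMatrix φ).map (eval x) *ᵥ x =
      eval x φ - eval 0 φ - eval 0 (directionalDeriv x φ) := by
  have hone : (weightedRay 1 x φ).eval 1 = eval x φ := by simp [eval_weightedRay]
  rw [dotProduct_taylorMatrix_mulVec, eval_rayAverage, ← derivative_weightedRay_one,
    ← derivative_weightedRay_one, integral_one_sub_mul_eval_derivative_derivative, hone,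
    derivative_weightedRay_one, eval_zero_weightedRay_one, eval_zero_weightedRay_one]

theorem X_dotProduct_taylorMatrix_mulVec_X [Fintype σ] (h₀ : eval 0 φ = 0)
    (hmin : ∀ x, 0 ≤ eval x φ) :
    X ⬝ᵥ taylorMatrix φ *ᵥ X = φ := by
  refine MvPolynomial.funext fun x => ?_
  have hX : eval x ∘ X = x := funext fun i => eval_X i
  have hmulVec : eval x ∘ (taylorMatrix φ *ᵥ X) = (taylorMatrix φ).map (eval x) *ᵥ x :=
    funext fun i => by rw [Function.comp_apply, RingHom.map_mulVec, hX]
  rw [RingHom.map_dotProduct, hmulVec, hX, dotProduct_self_taylorMatrix_mulVec, h₀,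
    eval_zero_directionalDeriv_eq_zero_of_forall_le (by rwa [h₀]), sub_zero, sub_zero]

theorem posDef_map_taylorMatrix [Finite σ] (hφ : ConvexOn ℝ Set.univ fun x => eval x φ)
    (hpos : ∀ v, v ≠ 0 → 0 < eval 0 (directionalDeriv v (directionalDeriv v φ))) (x : σ → ℝ) :
    ((taylorMatrix φ).map (eval x)).PosDef := by
  cases nonempty_fintype σ
  refine PosDef.of_dotProduct_mulVec_pos ?_ fun v hv => ?_
  · rw [IsHermitian, conjTranspose_eq_transpose_of_trivial]
    exact (isSymm_taylorMatrix φ).map _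
  rw [star_trivial, dotProduct_taylorMatrix_mulVec, eval_rayAverage]
  set P := weightedRay 1 x (directionalDeriv v (directionalDeriv v φ)) with hP
  have hP_nonneg (t : ℝ) : 0 ≤ P.eval t := by
    rw [eval_weightedRay]
    exact eval_directionalDeriv_directionalDeriv_nonneg_of_convexOn hφ _ v
  have hP_zero : 0 < P.eval 0 := by
    rw [hP, eval_zero_weightedRay_one]
    exact hpos v hv
  refine intervalIntegral.integral_pos zero_lt_one (by fun_prop) (fun t ht => ?_)
    ⟨0, Set.left_mem_Icc.2 zero_le_one, by simpa using hP_zero⟩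
  exact mul_nonneg (sub_nonneg.2 ht.2) (hP_nonneg t)

end Taylor

section LagrangeMultipliers

variable {E κ : Type*} [AddCommGroup E] [Module ℝ E] {c : κ → E → ℝ}

theorem convex_setOf_exists_forall_lt (hc : ∀ k, ConvexOn ℝ Set.univ (c k)) :
    Convex ℝ {u : κ → ℝ | ∃ x, ∀ k, c k x < u k} := by
  rintro u ⟨x, hx⟩ w ⟨y, hy⟩ a b ha hb hab
  refine ⟨a • x + b • y, fun k => ?_⟩
  exact ((hc k).convex_strict_epigraph (x := (x, u k)) ⟨Set.mem_univ x, hx k⟩ (y := (y, w k))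
    ⟨Set.mem_univ y, hy k⟩ ha hb hab).2

theorem isOpen_setOf_exists_forall_lt {X κ : Type*} [Finite κ] (c : κ → X → ℝ) :
    IsOpen {u : κ → ℝ | ∃ x, ∀ k, c k x < u k} := by
  simp only [Set.ofPred_exists, Set.ofPred_forall]
  exact isOpen_iUnion fun x => isOpen_iInter_of_finite fun k =>
    isOpen_lt continuous_const (continuous_apply k)

theorem nonneg_of_forall_nonneg_add_mul_pos {s d : ℝ} (h : ∀ t, 0 ≤ t → 0 < s + t * d) :
    0 ≤ d := by
  by_contra! hd
  have hlt := h (|s| / -d) (div_nonneg (abs_nonneg s) (neg_nonneg.2 hd.le))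
  rw [div_neg, neg_mul, div_mul_cancel₀ _ hd.ne] at hlt
  linarith [le_abs_self s]

variable [Fintype κ]

theorem exists_forall_pos_sum_mul_of_convexOn (hc : ∀ k, ConvexOn ℝ Set.univ (c k))
    (h : ∀ x, ∃ k, 0 ≤ c k x) :
    ∃ a : κ → ℝ, ∀ (x : E) (w : κ → ℝ), (∀ k, 0 < w k) → 0 < ∑ k, a k * (c k x + w k) := by
  classical
  have hzero : (0 : κ → ℝ) ∉ {u : κ → ℝ | ∃ x, ∀ k, c k x < u k} := by
    rintro ⟨x, hx⟩
    obtain ⟨k, hk⟩ := h x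
    exact hk.not_gt (hx k)
  obtain ⟨L, hL⟩ := geometric_hahn_banach_point_open (convex_setOf_exists_forall_lt hc)
    (isOpen_setOf_exists_forall_lt c) hzero
  refine ⟨fun k => L fun l => if k = l then 1 else 0, fun x w hw => ?_⟩
  have hpos := hL (fun k => c k x + w k) ⟨x, fun k => lt_add_of_pos_right _ (hw k)⟩
  rw [map_zero, ← ContinuousLinearMap.coe_coe, LinearMap.pi_apply_eq_sum_univ] at hpos
  simpa only [smul_eq_mul, mul_comm, ContinuousLinearMap.coe_coe] using hpos

theorem exists_ne_zero_forall_nonneg_sum_mul_of_convexOn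
    (hc : ∀ k, ConvexOn ℝ Set.univ (c k)) (h : ∀ x, ∃ k, 0 ≤ c k x) :
    ∃ a : κ → ℝ, a ≠ 0 ∧ (∀ k, 0 ≤ a k) ∧ ∀ x, 0 ≤ ∑ k, a k * c k x := by
  classical
  obtain ⟨a, ha⟩ := exists_forall_pos_sum_mul_of_convexOn hc h
  refine ⟨a, ?_, fun k => ?_, fun x => ?_⟩
  · rintro rfl
    simpa using ha 0 1 fun _ => one_pos
  · refine nonneg_of_forall_nonneg_add_mul_pos (s := ∑ l, a l * (c l 0 + 1)) fun t ht => ?_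
    have hpos := ha 0 (fun l => 1 + if l = k then t else 0) fun l => by positivity
    simp only [← add_assoc, mul_add (a _) (_ + 1), Finset.sum_add_distrib] at hpos
    simpa [mul_comm t] using hpos
  · have hlim : Filter.Tendsto (fun ε : ℝ => ∑ k, a k * (c k x + ε)) (nhdsWithin 0 (Set.Ioi 0))
        (nhds (∑ k, a k * (c k x + 0))) :=
      (Continuous.tendsto (by fun_prop) 0).mono_left nhdsWithin_le_nhds
    simp only [add_zero] at hlim
    refine ge_of_tendsto hlim ?_
    filter_upwards [self_mem_nhdsWithin] with ε hε using (ha x (fun _ => ε) fun _ => hε).le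

theorem exists_lagrangeMultipliers_of_slater {f : E → ℝ} (hf : ConvexOn ℝ Set.univ f)
    (hc : ∀ k, ConvexOn ℝ Set.univ (c k)) (hslater : ∃ x, ∀ k, c k x < 0)
    (hmin : ∀ x, (∀ k, c k x ≤ 0) → 0 ≤ f x) :
    ∃ μ : κ → ℝ, (∀ k, 0 ≤ μ k) ∧ ∀ x, 0 ≤ f x + ∑ k, μ k * c k x := by
  obtain ⟨a, ha, ha_nonneg, hsum⟩ :=
    exists_ne_zero_forall_nonneg_sum_mul_of_convexOn (c := fun k : Option κ => k.elim f c)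
      (Option.forall.2 ⟨hf, hc⟩) fun x => by
        by_contra! hneg
        exact (hneg none).not_ge (hmin x fun k => (hneg (some k)).le)
  simp only [Fintype.sum_option, Option.elim_none, Option.elim_some] at hsum
  have hpos : 0 < a none := by
    refine (ha_nonneg none).lt_of_ne' fun hnone => ha ?_
    obtain ⟨x, hx⟩ := hslater
    have hterm (k : κ) : a (some k) * c k x ≤ 0 :=
      mul_nonpos_of_nonneg_of_nonpos (ha_nonneg _) (hx k).le
    have hzero : ∑ k, a (some k) * c k x = 0 :=
      (Finset.sum_nonpos fun k _ => hterm k).antisymm (by simpa [hnone] using hsum x)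
    rw [Finset.sum_eq_zero_iff_of_nonpos fun k _ => hterm k] at hzero
    ext (_ | k)
    · exact hnone
    · exact (mul_eq_zero.1 (hzero k (Finset.mem_univ k))).resolve_right (hx k).ne
  refine ⟨fun k => a (some k) / a none, fun k => div_nonneg (ha_nonneg _) hpos.le, fun x => ?_⟩
  have hdiv : f x + ∑ k, a (some k) / a none * c k x =
      (a none * f x + ∑ k, a (some k) * c k x) / a none := by
    simp only [div_mul_eq_mul_div, ← Finset.sum_div]
    field_simp
  rw [hdiv]
  exact div_nonneg (hsum x) hpos.le

end LagrangeMultipliers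

section Certificate

universe u

open MvPolynomial Matrix

theorem isSumSq_map {F R S : Type*} [NonUnitalNonAssocSemiring R] [NonUnitalNonAssocSemiring S]
    [FunLike F R S] [NonUnitalRingHomClass F R S] (f : F) {s : R} (hs : IsSumSq s) :
    IsSumSq (f s) := by
  induction hs with
  | zero => rw [map_zero]; exact .zero
  | sq_add a _ ih => rw [map_add, map_mul]; exact .sq_add _ ih

theorem convexOn_eval_sum_C_mul {σ κ : Type*} {s : Finset κ} {w : κ → ℝ}
    {H : κ → MvPolynomial σ ℝ} (hw : ∀ k ∈ s, 0 ≤ w k)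
    (hH : ∀ k ∈ s, ConvexOn ℝ Set.univ fun x => eval x (H k)) :
    ConvexOn ℝ Set.univ fun x => eval x (∑ k ∈ s, C (w k) * H k) := by
  simp only [map_sum, map_mul, eval_C]
  rw [← Finset.sum_fn]
  exact Finset.sum_induction _ (ConvexOn ℝ Set.univ) (fun _ _ => ConvexOn.add)
    (convexOn_const 0 convex_univ) fun k hk => (hH k hk).smul (hw k hk)

theorem convexOn_eval_sub_C {σ : Type*} {P : MvPolynomial σ ℝ}
    (hP : ConvexOn ℝ Set.univ fun x => eval x P) (c : ℝ) :
    ConvexOn ℝ Set.univ fun x => eval x (P - C c) := by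
  simp only [map_sub, eval_C]
  simp only [sub_eq_add_neg]
  exact hP.add_const (-c)

variable {σ : Type u}

theorem exists_isSumSq_eq_sub_mul_of_convexOn [Finite σ] {φ Λ : MvPolynomial σ ℝ} {x : σ → ℝ}
    (hφ : ConvexOn ℝ Set.univ fun y => eval y φ) (hΛ : ConvexOn ℝ Set.univ fun y => eval y Λ)
    (hφ_pos : ∀ v, v ≠ 0 → 0 < eval x (directionalDeriv v (directionalDeriv v φ)))
    (hΛ_pos : ∀ v, v ≠ 0 → 0 < eval x (directionalDeriv v (directionalDeriv v Λ)))
    (hΛ_zero : eval x Λ = 0) (hΛ_nonneg : ∀ y, 0 ≤ eval y Λ) :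
    ∃ s s₀ : MvPolynomial σ ℝ, IsSumSq s ∧ IsSumSq s₀ ∧ Λ = s₀ - s * φ := by
  have hshift (ψ : MvPolynomial σ ℝ) (v : σ → ℝ) :
      eval 0 (directionalDeriv v (directionalDeriv v (shift x ψ))) =
        eval x (directionalDeriv v (directionalDeriv v ψ)) := by
    rw [directionalDeriv_shift, directionalDeriv_shift, eval_shift, zero_add]
  cases nonempty_fintype σ
  obtain ⟨s, s₀, hs, hs₀, heq⟩ := exists_isSumSq_dotProduct_mulVec_eq (φ := shift x φ)
    (fun K _ _ _ _ ρ hρ r => mk_nonneg_of_convexOn_of_nonpos (convexOn_eval_shift hφ x)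
      (fun v hv => two_le_natDegree_weightedRay_of_eval_ne_zero
        (hshift φ v ▸ (hφ_pos v hv).ne')) ρ hρ r)
    (isSymm_taylorMatrix (shift x Λ))
    (fun χ _ => by
      rw [aeval_unique χ]
      exact posDef_map_taylorMatrix (convexOn_eval_shift hΛ x)
        (fun v hv => hshift Λ v ▸ hΛ_pos v hv) (χ ∘ X)) X
  rw [X_dotProduct_taylorMatrix_mulVec_X (by rw [eval_shift, zero_add, hΛ_zero])
    (fun y => by rw [eval_shift]; exact hΛ_nonneg _)] at heq
  refine ⟨shift (-x) s, shift (-x) s₀, isSumSq_map _ hs, isSumSq_map _ hs₀, ?_⟩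
  rw [← shift_neg_shift x Λ, heq, map_sub, map_mul, shift_neg_shift]

theorem exists_isSumSq_eq_of_slater [Fintype σ] {κ : Type*} [Fintype κ] {P : MvPolynomial σ ℝ}
    {H : κ → MvPolynomial σ ℝ} (hP : ConvexOn ℝ Set.univ fun y => eval y P)
    (hH : ∀ k, ConvexOn ℝ Set.univ fun y => eval y (H k))
    (hslater : ∃ y, ∀ k, eval y (H k) < 0) {x : σ → ℝ} (hx : ∀ k, eval x (H k) ≤ 0)
    (hmin : ∀ y, (∀ k, eval y (H k) ≤ 0) → eval x P ≤ eval y P)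
    (hpos : ∀ v, v ≠ 0 → 0 < iteratedFDeriv ℝ 2 (fun y => eval y P) x ![v, v]) (c : ℝ) :
    ∃ (s s₀ : MvPolynomial σ ℝ) (μ : κ → ℝ), IsSumSq s ∧ IsSumSq s₀ ∧ (∀ k, 0 ≤ μ k) ∧
      P - C (eval x P) = s₀ - ∑ k, C (μ k) * H k - s * (P - C c) := by
  simp only [iteratedFDeriv_two_eval_mvPolynomial] at hpos
  have hsub (a : ℝ) := convexOn_eval_sub_C hP a
  obtain ⟨μ, hμ, hnonneg⟩ := exists_lagrangeMultipliers_of_slater (hsub (eval x P)) hH hslater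
    fun y hy => by simpa using hmin y hy
  set M := ∑ k, C (μ k) * H k with hM_def
  have hM : ConvexOn ℝ Set.univ fun y => eval y M :=
    convexOn_eval_sum_C_mul (fun k _ => hμ k) fun k _ => hH k
  have hΛ_nonneg (y : σ → ℝ) : 0 ≤ eval y (P - C (eval x P) + M) := by
    simpa [M] using hnonneg y
  have hM_nonpos : eval x M ≤ 0 := by
    simpa only [M, map_sum, map_mul, eval_C] using
      Finset.sum_nonpos fun k _ => mul_nonpos_of_nonneg_of_nonpos (hμ k) (hx k)
  obtain ⟨s, s₀, hs, hs₀, heq⟩ := exists_isSumSq_eq_sub_mul_of_convexOn (x := x) (hsub c)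
    (Λ := P - C (eval x P) + M) (by simp only [map_add]; exact (hsub _).add hM)
    (fun v hv => by simpa using hpos v hv)
    (fun v hv => by
      simpa using add_pos_of_pos_of_nonneg (hpos v hv)
        (eval_directionalDeriv_directionalDeriv_nonneg_of_convexOn hM x v))
    (le_antisymm (by simpa using hM_nonpos) (hΛ_nonneg x)) hΛ_nonneg
  exact ⟨s, s₀, μ, hs, hs₀, hμ, by rw [← hM_def]; linear_combination heq⟩

end Certificate

theorem isSOS_of_isSumSq {n : ℕ} {s : MvPolynomial (Fin n) ℝ} (hs : IsSumSq s) : IsSOS s := by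
  induction hs with
  | zero => exact ⟨0, Fin.elim0, by simp⟩
  | sq_add a _ ih =>
    obtain ⟨r, u, rfl⟩ := ih
    exact ⟨r + 1, Fin.cons a u, by simp [Fin.sum_univ_succ, sq]⟩

theorem stmt_10 {n m p : ℕ} (F : Fin p → MvPolynomial (Fin n) ℝ)
    (G : Fin m → MvPolynomial (Fin n) ℝ)
    (f : Fin p → (Fin n → ℝ) → ℝ) (hf : ∀ j, f j = fun x => MvPolynomial.eval x (F j))
    (g : Fin m → (Fin n → ℝ) → ℝ) (hg : ∀ i, g i = fun x => MvPolynomial.eval x (G i))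
    (hconvf : ∀ j, ConvexOn ℝ Set.univ (f j)) (hconvg : ∀ i, ConvexOn ℝ Set.univ (g i))
    (lam : Fin p → ℝ) (hlam : ∀ j, 0 < lam j)
    (z₀ : Fin n → ℝ) (hz₀ : ∀ i, g i z₀ ≤ 0)
    -- (i) Slater condition
    (hSlater : ∃ xh : Fin n → ℝ, (∀ i, g i xh < 0) ∧ ∀ j, f j xh < f j z₀)
    -- x̄ minimizes λᵀf over K_{z₀}, with value f̄_{z₀}
    (xb : Fin n → ℝ) (fbar : ℝ)
    (hxb : (∀ i, g i xb ≤ 0) ∧ (∀ j, f j xb ≤ f j z₀))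
    (hmin : ∀ x : Fin n → ℝ, (∀ i, g i x ≤ 0) → (∀ j, f j x ≤ f j z₀) →
      ∑ j, lam j * f j xb ≤ ∑ j, lam j * f j x)
    (hfbar : fbar = ∑ j, lam j * f j xb)
    -- (ii) positive definiteness of the weighted Hessian at x̄
    (hPD : ∀ v : Fin n → ℝ, v ≠ 0 →
      0 < iteratedFDeriv ℝ 2 (fun x => ∑ j, lam j * f j x) xb ![v, v]) :
    ∃ (σ σ₀ : MvPolynomial (Fin n) ℝ) (μb : Fin m → ℝ) (νb : Fin p → ℝ),
      IsSOS σ ∧ IsSOS σ₀ ∧ (∀ i, 0 ≤ μb i) ∧ (∀ j, 0 ≤ νb j) ∧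
      (∑ j, MvPolynomial.C (lam j) * F j) - MvPolynomial.C fbar =
        σ₀ - (∑ i, MvPolynomial.C (μb i) * G i)
          - (∑ j, MvPolynomial.C (νb j) * (F j - MvPolynomial.C (f j z₀)))
          - σ * ((∑ j, MvPolynomial.C (lam j) * F j)
              - MvPolynomial.C (∑ j, lam j * f j z₀)) := by
  let P := ∑ j, MvPolynomial.C (lam j) * F j
  let H : Fin m ⊕ Fin p → MvPolynomial (Fin n) ℝ :=
    Sum.elim G fun j => F j - MvPolynomial.C (f j z₀)
  have hP_eval (x : Fin n → ℝ) : MvPolynomial.eval x P = ∑ j, lam j * f j x := by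
    simp [P, hf]
  have hH_nonpos (x : Fin n → ℝ) : (∀ k, MvPolynomial.eval x (H k) ≤ 0) ↔
      (∀ i, g i x ≤ 0) ∧ ∀ j, f j x ≤ f j z₀ := by
    simp [H, hf, hg]
  have hP : ConvexOn ℝ Set.univ fun x => MvPolynomial.eval x P :=
    convexOn_eval_sum_C_mul (fun j _ => (hlam j).le) fun j _ => hf j ▸ hconvf j
  have hH (k : Fin m ⊕ Fin p) : ConvexOn ℝ Set.univ fun x => MvPolynomial.eval x (H k) := by
    rcases k with i | j
    · exact hg i ▸ hconvg i
    · exact convexOn_eval_sub_C (hf j ▸ hconvf j) _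
  obtain ⟨σ, σ₀, μ, hσ, hσ₀, hμ, heq⟩ := exists_isSumSq_eq_of_slater hP hH
    (by simpa [H, hf, hg] using hSlater) ((hH_nonpos xb).2 hxb)
    (fun y hy => by simpa only [hP_eval] using hmin y ((hH_nonpos y).1 hy).1 ((hH_nonpos y).1 hy).2)
    (by simpa only [hP_eval] using hPD) (∑ j, lam j * f j z₀)
  refine ⟨σ, σ₀, μ ∘ .inl, μ ∘ .inr, isSOS_of_isSumSq hσ, isSOS_of_isSumSq hσ₀,
    fun i => hμ _, fun j => hμ _, ?_⟩
  rw [hfbar, ← hP_eval, heq, Fintype.sum_sum_type, ← sub_sub]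
  rfl
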